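/- arXiv:math/0611310 — 3 statements merged into one kernel-verified Lean document; each statement's English description precedes it below -/
import Mathlib

section
/- Let (A,ω,τ,K) be a C*-dynamical system which is ergodic with respect to some net (Λ_α) in Σ|_K with 0 < μ(Λ_α) < ∞ for α large enough. Then lim_α (1/μ(Λ_α⁻¹)) ∫_{Λ_α⁻¹} ω(a τ_g(b)) dg = ω(a)ω(b) for all a, b ∈ A; that is, (A,ω,τ,K⁻¹) is ergodic with respect to the net (Λ_α⁻¹). -/
open Filter Topology
open scoped Pointwise ComplexOrder

/-- A Følner net in a (sub)semigroup `K` of a measure group `(G, Σ, μ)`: a net `(Λ α)` of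
measurable subsets of `K`, indexed by a directed set, with `0 < μ (Λ α) < ∞` for `α` large
enough and `μ (Λ α ∆ (Λ α g)) / μ (Λ α) → 0` for every `g ∈ K`. -/
structure FolnerNetIn {G : Type*} [Group G] [MeasurableSpace G]
    (μ : MeasureTheory.Measure G) (K : Set G) where
  idx : Type
  [pre : Preorder idx]
  [ne : Nonempty idx]
  [dir : IsDirected idx (· ≤ ·)]
  Lam : idx → Set G
  meas : ∀ α, MeasurableSet (Lam α) ∧ Lam α ⊆ K
  fin : ∀ᶠ α in atTop, 0 < μ (Lam α) ∧ μ (Lam α) < ⊤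
  folner : ∀ g ∈ K, Tendsto
    (fun α => (μ (symmDiff (Lam α) (Lam α * {g}))).toReal / (μ (Lam α)).toReal)
    atTop (𝓝 0)

attribute [instance] FolnerNetIn.pre FolnerNetIn.ne FolnerNetIn.dir

open MeasureTheory

/-!
Invariance of the state moves the group element across the product:
`ω (a τ_{g⁻¹}(b)) = ω (τ_g(a) b)`, which is the conjugate of `ω (b* τ_g(a*))` because a positive
functional is Hermitian. Since inversion preserves `μ`, the mean over `Λ⁻¹` of the correlation of
`(a, b)` is therefore the conjugate of the mean over `Λ` of the correlation of `(b*, a*)`, and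
`conj (ω(b*) ω(a*)) = ω(a) ω(b)`.
-/

open scoped ComplexConjugate

theorem map_star_of_map_star_mul_self_nonneg {A : Type*} [Ring A] [StarRing A] [Algebra ℂ A]
    [StarModule ℂ A] {ω : A →ₗ[ℂ] ℂ} (hω : ∀ a, 0 ≤ ω (star a * a)) (a : A) :
    ω (star a) = conj (ω a) := by
  have im_eq_zero (x : A) : (ω (star x * x)).im = 0 := (Complex.nonneg_iff.1 (hω x)).2.symm
  have im_one : (ω 1).im = 0 := by simpa only [star_one, mul_one] using im_eq_zero 1
  have im_add : (ω (star a)).im + (ω a).im = 0 := by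
    have h := im_eq_zero (1 + a)
    simp only [star_add, star_one, add_mul, mul_add, one_mul, mul_one, map_add, Complex.add_im,
      im_one, im_eq_zero a] at h
    linarith
  have re_sub : (ω (star a)).re - (ω a).re = 0 := by
    have h := im_eq_zero (1 + Complex.I • a)
    simp only [star_add, star_one, star_smul, add_mul, mul_add, one_mul, mul_one, map_add,
      smul_mul_assoc, mul_smul_comm, map_smul, smul_eq_mul, Complex.add_im, Complex.mul_im,
      Complex.mul_re, Complex.I_re, Complex.I_im, Complex.star_def, Complex.conj_I,
      Complex.neg_re, Complex.neg_im, im_one, im_eq_zero a] at h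
    linarith
  apply Complex.ext
  · rw [Complex.conj_re]
    linarith
  · rw [Complex.conj_im]
    linarith

section InverseInvariant

variable {G : Type*} [InvolutiveInv G] [MeasurableSpace G] [MeasurableInv G] (μ : Measure G)
  [μ.IsInvInvariant]

theorem measurePreserving_inv_restrict (s : Set G) :
    MeasurePreserving Inv.inv (μ.restrict s⁻¹) (μ.restrict s) :=
  (Measure.measurePreserving_inv μ).restrict_preimage_emb
    (MeasurableEquiv.inv G).measurableEmbedding s

theorem setAverage_inv_comp_inv {E : Type*} [NormedAddCommGroup E] [NormedSpace ℝ E] (s : Set G)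
    (f : G → E) : ⨍ g in s⁻¹, f g⁻¹ ∂μ = ⨍ g in s, f g ∂μ := by
  have integral_eq : ∫ g in s⁻¹, f g⁻¹ ∂μ = ∫ g in s, f g ∂μ :=
    (measurePreserving_inv_restrict μ s).integral_comp
      (MeasurableEquiv.inv G).measurableEmbedding f
  rw [setAverage_eq, setAverage_eq, integral_eq, measureReal_def, Measure.measure_inv,
    measureReal_def]

end InverseInvariant

theorem correlation_eq_conj_correlation_inv {A : Type*} [NonUnitalNonAssocSemiring A] [StarRing A]
    [Module ℂ A] {ω : A →ₗ[ℂ] ℂ} (hω_star : ∀ a, ω (star a) = conj (ω a)) {G : Type*} [Group G]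
    {τ : G →* (A ≃⋆ₐ[ℂ] A)} (hω_inv : ∀ g a, ω (τ g a) = ω a) (a b : A) (g : G) :
    ω (a * τ g b) = conj (ω (star b * τ g⁻¹ (star a))) := by
  have cancel : τ g⁻¹ (τ g b) = b := by
    rw [map_inv, StarAlgEquiv.aut_inv, StarAlgEquiv.symm_apply_apply]
  calc ω (a * τ g b) = ω (τ g⁻¹ (a * τ g b)) := (hω_inv _ _).symm
    _ = ω (τ g⁻¹ a * b) := by rw [map_mul, cancel]
    _ = conj (ω (star b * τ g⁻¹ (star a))) := by
      rw [← hω_star, star_mul, star_star, map_star, star_star]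

/-- Ergodicity of the system `(A, ω, τ)` with respect to a family `Λ` of subsets of `G`, the limit
being taken along a filter `l` so as to cover nets. Measurability of the correlations is part of
the notion, since the Bochner integral of a non-measurable function is `0`. -/
structure IsErgodicAlong {A : Type*} [NonUnitalNonAssocSemiring A] [StarRing A] [Module ℂ A]
    (ω : A →ₗ[ℂ] ℂ) {G : Type*} [Group G] [MeasurableSpace G] (μ : Measure G)
    (τ : G →* (A ≃⋆ₐ[ℂ] A)) {ι : Type*} (l : Filter ι) (Λ : ι → Set G) : Prop where
  aestronglyMeasurable : ∀ a b i,
    AEStronglyMeasurable (fun g => ω (a * τ g b)) (μ.restrict (Λ i))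
  tendsto_setAverage : ∀ a b,
    Tendsto (fun i => ⨍ g in Λ i, ω (a * τ g b) ∂μ) l (𝓝 (ω a * ω b))

theorem ergodic_inverse_net_general {A : Type*} [Ring A] [StarRing A] [Algebra ℂ A]
    [StarModule ℂ A] {ω : A →ₗ[ℂ] ℂ} (hω_pos : ∀ a, 0 ≤ ω (star a * a))
    {G : Type*} [Group G] [MeasurableSpace G] [MeasurableInv G] {μ : Measure G}
    [μ.IsInvInvariant] {τ : G →* (A ≃⋆ₐ[ℂ] A)} (hω_inv : ∀ g a, ω (τ g a) = ω a)
    {ι : Type*} {l : Filter ι} {Λ : ι → Set G} (hErg : IsErgodicAlong ω μ τ l Λ) :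
    IsErgodicAlong ω μ τ l fun i => (Λ i)⁻¹ := by
  have hω_star := map_star_of_map_star_mul_self_nonneg hω_pos
  have hcorr := correlation_eq_conj_correlation_inv hω_star hω_inv
  refine ⟨fun a b i => ?_, fun a b => ?_⟩
  · simp only [hcorr a b]
    exact Complex.continuous_conj.comp_aestronglyMeasurable
      ((hErg.aestronglyMeasurable (star b) (star a) i).comp_measurePreserving
        (measurePreserving_inv_restrict μ (Λ i)))
  · have average_eq (i : ι) : ⨍ g in (Λ i)⁻¹, ω (a * τ g b) ∂μ =
        conj (⨍ g in Λ i, ω (star b * τ g (star a)) ∂μ) := by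
      simp only [hcorr a b]
      rw [setAverage_inv_comp_inv μ (Λ i) fun g => conj (ω (star b * τ g (star a)))]
      exact integral_conj
    have limit_eq : conj (ω (star b) * ω (star a)) = ω a * ω b := by
      rw [hω_star, hω_star, map_mul, Complex.conj_conj, Complex.conj_conj, mul_comm]
    simp only [average_eq, ← limit_eq]
    exact (Complex.continuous_conj.tendsto _).comp (hErg.tendsto_setAverage (star b) (star a))

/-- **Lemma 4.1.** Let `(A, ω, τ, K)` be a C*-dynamical system which is ergodic with respect
to some net `(Λ α)` in `Σ|_K` (with `0 < μ (Λ α) < ∞` for `α` large enough).  Then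
`lim_α (1/μ(Λ α⁻¹)) ∫_{Λ α⁻¹} ω (a τ_g(b)) dg = ω(a) ω(b)` for all `a b : A`,
i.e. `(A, ω, τ, K⁻¹)` is ergodic with respect to `(Λ α⁻¹)`. -/
theorem ergodic_inverse_net
    -- a unital C*-algebra A
    {A : Type*} [NormedRing A] [StarRing A] [CStarRing A] [NormedAlgebra ℂ A]
    [CompleteSpace A] [StarModule ℂ A]
    -- a state ω on A
    (ω : A →ₗ[ℂ] ℂ) (hω_pos : ∀ a : A, 0 ≤ ω (star a * a)) (hω_one : ω 1 = 1)
    -- a right invariant measure group (G, Σ, μ) with G abelian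
    {G : Type*} [CommGroup G] [MeasurableSpace G] (μ : Measure G)
    (hTrans : ∀ (V : Set G) (g : G), MeasurableSet V → MeasurableSet (V * {g}))
    (hRight : ∀ (V : Set G) (g : G), MeasurableSet V → μ (V * {g}) = μ V)
    -- the inverse map is measurable and μ-invariant
    (hInvMeas : Measurable (fun g : G => g⁻¹))
    (hInvInv : ∀ V : Set G, MeasurableSet V → μ V⁻¹ = μ V)
    -- K is a Følner semigroup in G
    (K : Set G) (hKmeas : MeasurableSet K) (hKmul : ∀ g ∈ K, ∀ h ∈ K, g * h ∈ K)
    (hKFolner : Nonempty (FolnerNetIn μ K))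
    -- the action τ, making (A, ω, τ, K) a C*-dynamical system
    (τ : G → A ≃⋆ₐ[ℂ] A)
    (hτ_one : ∀ a : A, τ 1 a = a)
    (hτ_mul : ∀ g h a, τ g (τ h a) = τ (g * h) a)
    (hω_inv : ∀ g a, ω (τ g a) = ω a)
    (hτ_meas : ∀ a b : A, Measurable fun g : K => ω (a * τ (g : G) b))
    -- a net (Λ α) in Σ|_K with 0 < μ (Λ α) < ∞ for α large enough
    {ι : Type*} [Preorder ι] [Nonempty ι] [IsDirected ι (· ≤ ·)]
    (Λ : ι → Set G) (hΛ : ∀ α, MeasurableSet (Λ α) ∧ Λ α ⊆ K)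
    (hΛfin : ∀ᶠ α in atTop, 0 < μ (Λ α) ∧ μ (Λ α) < ⊤)
    -- the system is ergodic with respect to (Λ α)
    (hErg : ∀ a b : A,
      Tendsto (fun α => (μ (Λ α)).toReal⁻¹ • ∫ g in Λ α, ω (a * τ g b) ∂μ)
        atTop (𝓝 (ω a * ω b))) :
    -- conclusion: (A, ω, τ, K⁻¹) is ergodic with respect to (Λ α⁻¹)
    ∀ a b : A,
      Tendsto (fun α => (μ ((Λ α)⁻¹)).toReal⁻¹ • ∫ g in (Λ α)⁻¹, ω (a * τ g b) ∂μ)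
        atTop (𝓝 (ω a * ω b)) := by
  have : MeasurableInv G := ⟨hInvMeas⟩
  have : μ.IsInvInvariant :=
    ⟨Measure.ext fun V hV => (Measure.map_apply hInvMeas hV).trans (hInvInv V hV)⟩
  let τ' : G →* (A ≃⋆ₐ[ℂ] A) :=
    MonoidHom.mk' τ fun g h => StarAlgEquiv.ext fun a => (hτ_mul g h a).symm
  have hErgodic : IsErgodicAlong ω μ τ' atTop Λ :=
    { aestronglyMeasurable := fun a b α =>
        (aemeasurable_restrict_of_measurable_subtype hKmeas
          (hτ_meas a b)).aestronglyMeasurable.mono_set (hΛ α).2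
      tendsto_setAverage := fun a b => (hErg a b).congr fun _ => (setAverage_eq _ _ _).symm }
  intro a b
  exact ((ergodic_inverse_net_general hω_pos hω_inv hErgodic).tendsto_setAverage a b).congr
    fun _ => setAverage_eq _ _ _
end

section
/- Let (A,ω,τ,K) be an ergodic C*-dynamical system and let (Λ_{1α}), (Λ_{2α}) be Følner nets in K over the same directed set. If (g,h) ↦ ω(τ_h(a) τ_{gh}(b) τ_g(c)) is (Σ|_K × Σ|_K)-measurable for all a, b, c ∈ A, then lim_α sup_{g₁,g₂ ∈ K} | M_{α,g₁,g₂}( ω(τ_g(a) τ_{gh}(b) τ_h(c)) ) − ω(a)ω(b)ω(c) | = 0 for all a, b, c ∈ A. -/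
open Filter Topology
open scoped Pointwise ComplexOrder

open MeasureTheory

/-- Ergodicity of `(A, ω, τ, K)` along a Følner net in `K`. -/
def FolnerNetIn.ErgodicAlong
    {A : Type*} [NormedRing A] [StarRing A] [CStarRing A] [NormedAlgebra ℂ A]
    [CompleteSpace A] [StarModule ℂ A]
    {G : Type*} [CommGroup G] [MeasurableSpace G] {μ : Measure G} {K : Set G}
    (F : FolnerNetIn μ K) (ω : A →ₗ[ℂ] ℂ) (τ : G → A ≃⋆ₐ[ℂ] A) : Prop :=
  ∀ a b : A,
    Tendsto (fun α => (μ (F.Lam α)).toReal⁻¹ • ∫ g in F.Lam α, ω (a * τ g b) ∂μ)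
      atTop (𝓝 (ω a * ω b))

/-
By invariance and commutativity,
`ω (τ_g(a) τ_{gh}(b) τ_h(c)) = ω (τ_{h⁻¹}(a τ_h(b)) τ_{g⁻¹}(c))`, so averaging first over `g` and
then over `h` turns the triple product into `ω (a τ_h(b)) ω(c)` and then into `ω(a) ω(b) ω(c)`.
Each step is the mean ergodic theorem in the GNS space of `ω`. The iteration works because this
theorem gives norm convergence, i.e. an error `δ ‖star x‖_ω` that is uniform in the left factor
`x = a τ_h(b)`, hence in `h` and in the translates. Ergodicity along
`g⁻¹` follows from ergodicity along `g` by complex conjugation.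

The mean ergodic theorem is proved with scalar integrals only. If the averages of the orbit of `y`
tend weakly to `0` along one family, then by separation `0` lies in the closed convex hull of the
orbit; since the averages of `y - U_k y` tend to `0` in norm along every Følner family, so do those
of `y`.
-/

section Averages

variable {X E : Type*} [MeasurableSpace X] {μ : Measure X} {S T K : Set X}
  [NormedAddCommGroup E] {f g : X → E} {C : ℝ}

lemma integrableOn_of_bound_of_subset (hSK : S ⊆ K) (hS : μ S ≠ ⊤)
    (hf : AEStronglyMeasurable f (μ.restrict K)) (hC : ∀ x, ‖f x‖ ≤ C) : IntegrableOn f S μ :=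
  .of_bound hS.lt_top (hf.mono_set hSK) C (ae_of_all _ hC)

variable [NormedSpace ℝ E]

lemma norm_setAverage_le_of_norm_le (hS : μ S ≠ ⊤) (hC : 0 ≤ C) (hf : ∀ x ∈ S, ‖f x‖ ≤ C) :
    ‖⨍ x in S, f x ∂μ‖ ≤ C := by
  rw [setAverage_eq, norm_smul, Real.norm_of_nonneg (by positivity)]
  calc (μ.real S)⁻¹ * ‖∫ x in S, f x ∂μ‖
      ≤ (μ.real S)⁻¹ * (C * μ.real S) := by
        gcongr
        exact norm_setIntegral_le_of_norm_le_const hS.lt_top hf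
    _ = (μ.real S)⁻¹ * μ.real S * C := by ring
    _ ≤ C := mul_le_of_le_one_left hC inv_mul_le_one

lemma setAverage_add (hf : IntegrableOn f S μ) (hg : IntegrableOn g S μ) :
    ⨍ x in S, (f x + g x) ∂μ = ⨍ x in S, f x ∂μ + ⨍ x in S, g x ∂μ :=
  integral_add hf.to_average hg.to_average

lemma setAverage_sub (hf : IntegrableOn f S μ) (hg : IntegrableOn g S μ) :
    ⨍ x in S, (f x - g x) ∂μ = ⨍ x in S, f x ∂μ - ⨍ x in S, g x ∂μ :=
  integral_sub hf.to_average hg.to_average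

lemma setAverage_sub_const [CompleteSpace E] (hS₀ : μ S ≠ 0) (hS : μ S ≠ ⊤)
    (hf : IntegrableOn f S μ) (c : E) :
    ⨍ x in S, (f x - c) ∂μ = ⨍ x in S, f x ∂μ - c := by
  rw [setAverage_sub hf (integrableOn_const hS), setAverage_const hS₀ hS]

lemma norm_setAverage_sub_mul_le {F f : X → ℂ} {w z : ℂ} {r s : ℝ} (hS : μ S ≠ ⊤)
    (hF : AEStronglyMeasurable F (μ.restrict S)) (hf : IntegrableOn f S μ) (hr : 0 ≤ r)
    (hFf : ∀ x, ‖F x - f x * w‖ ≤ r) (hfz : ‖⨍ x in S, f x ∂μ - z‖ ≤ s) :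
    ‖⨍ x in S, F x ∂μ - z * w‖ ≤ r + s * ‖w‖ := by
  have hfw : IntegrableOn (fun x ↦ f x * w) S μ := hf.mul_const w
  have hdiff : IntegrableOn (fun x ↦ F x - f x * w) S μ :=
    .of_bound hS.lt_top (hF.sub hfw.aestronglyMeasurable) r (ae_of_all _ hFf)
  have hsplit : ⨍ x in S, F x ∂μ - z * w =
      ⨍ x in S, (F x - f x * w) ∂μ + (⨍ x in S, f x ∂μ - z) * w := by
    have hmul : ⨍ x in S, f x * w ∂μ = (⨍ x in S, f x ∂μ) * w := integral_mul_const w f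
    have hadd := setAverage_add hdiff hfw
    simp only [sub_add_cancel] at hadd
    rw [hadd, hmul]
    ring
  rw [hsplit]
  refine norm_add_le_of_le (norm_setAverage_le_of_norm_le hS hr fun x _ ↦ hFf x) ?_
  rw [norm_mul]
  gcongr

lemma norm_setIntegral_sub_setIntegral_le (hSm : MeasurableSet S) (hTm : MeasurableSet T)
    (hS : μ S ≠ ⊤) (hT : μ T ≠ ⊤) (hfS : IntegrableOn f S μ) (hfT : IntegrableOn f T μ)
    (hC : ∀ x, ‖f x‖ ≤ C) :
    ‖∫ x in S, f x ∂μ - ∫ x in T, f x ∂μ‖ ≤ C * μ.real (symmDiff S T) := by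
  have hST : μ (symmDiff S T) ≠ ⊤ := by
    have := measure_union_ne_top hS hT
    exact measure_ne_top_of_subset Set.symmDiff_subset_union this
  have hbound (x : X) : ‖S.indicator f x - T.indicator f x‖ ≤
      (symmDiff S T).indicator (fun _ ↦ C) x := by
    by_cases hxS : x ∈ S <;> by_cases hxT : x ∈ T <;>
      simp [Set.mem_symmDiff, hxS, hxT, hC]
  calc ‖∫ x in S, f x ∂μ - ∫ x in T, f x ∂μ‖
      = ‖∫ x, (S.indicator f x - T.indicator f x) ∂μ‖ := by
        rw [integral_sub (hfS.integrable_indicator hSm) (hfT.integrable_indicator hTm),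
          integral_indicator hSm, integral_indicator hTm]
    _ ≤ ∫ x, (symmDiff S T).indicator (fun _ ↦ C) x ∂μ :=
        norm_integral_le_of_norm_le
          ((integrableOn_const hST).integrable_indicator (hSm.symmDiff hTm)) (ae_of_all _ hbound)
    _ = C * μ.real (symmDiff S T) := by
        rw [integral_indicator (hSm.symmDiff hTm), setIntegral_const, smul_eq_mul, mul_comm]

lemma aestronglyMeasurable_restrict_of_measurable_subtype {f : X → ℂ} (hK : MeasurableSet K)
    (hf : Measurable fun x : K ↦ f x) : AEStronglyMeasurable f (μ.restrict K) :=
  ((aemeasurable_restrict_iff_comap_subtype hK).2 hf.aemeasurable).aestronglyMeasurable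

lemma aestronglyMeasurable_setAverage {Y : Type*} [MeasurableSpace Y] {ν : Measure Y} {L T : Set Y}
    {f : X → Y → ℂ} (hK : MeasurableSet K) (hL : MeasurableSet L)
    (hf : Measurable fun p : K × L ↦ f p.1 p.2) (hSK : S ⊆ K) (hSm : MeasurableSet S)
    (hTL : T ⊆ L) (hTm : MeasurableSet T) (hT : ν T ≠ ⊤) :
    AEStronglyMeasurable (fun x ↦ ⨍ y in T, f x y ∂ν) (μ.restrict S) := by
  obtain ⟨F, hF, hFf⟩ := ((MeasurableEmbedding.subtype_coe hK).prodMap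
    (.subtype_coe hL)).exists_measurable_extend hf fun _ ↦ inferInstance
  have hFf' {x y} (hx : x ∈ K) (hy : y ∈ L) : F (x, y) = f x y :=
    congrFun hFf (⟨x, hx⟩, ⟨y, hy⟩)
  have : IsFiniteMeasure (ν.restrict T) := isFiniteMeasure_restrict.2 hT
  have hint : StronglyMeasurable fun x ↦ ∫ y in T, F (x, y) ∂ν :=
    hF.stronglyMeasurable.integral_prod_right'
  refine (hint.const_smul (ν.real T)⁻¹).aestronglyMeasurable.congr ?_
  filter_upwards [ae_restrict_mem hSm] with x hx
  rw [Pi.smul_apply, setAverage_eq]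
  exact congrArg _ (setIntegral_congr_fun hTm fun y hy ↦ hFf' (hSK hx) (hTL hy))

end Averages

section Translates

lemma mul_singleton_subset {G : Type*} [Mul G] {K S : Set G} (hK : ∀ g ∈ K, ∀ h ∈ K, g * h ∈ K)
    (hSK : S ⊆ K) {k : G} (hk : k ∈ K) : S * {k} ⊆ K :=
  Set.mul_subset_iff.2 fun g hg h hh ↦ hK g (hSK hg) h (hh ▸ hk)

variable {G E : Type*} [Group G] [MeasurableSpace G] {μ : Measure G} [NormedAddCommGroup E]
  [NormedSpace ℝ E]

lemma measurableMul_of_measurableSet_mul_singleton {G : Type*} [CommGroup G] [MeasurableSpace G]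
    (h : ∀ (V : Set G) (g : G), MeasurableSet V → MeasurableSet (V * {g})) : MeasurableMul G := by
  have hright (g : G) : Measurable (· * g) := fun V hV ↦ by simpa using h V g⁻¹ hV
  exact ⟨fun g ↦ by simpa only [mul_comm g] using hright g, hright⟩

lemma isMulRightInvariant_of_measure_mul_singleton [MeasurableMul G]
    (h : ∀ (V : Set G) (g : G), MeasurableSet V → μ (V * {g}) = μ V) :
    μ.IsMulRightInvariant := by
  refine ⟨fun g ↦ Measure.ext fun V hV ↦ ?_⟩
  rw [Measure.map_apply (measurable_mul_const g) hV]
  simpa using h V g⁻¹ hV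

variable [MeasurableMul G] [μ.IsMulRightInvariant] {S : Set G}

lemma measure_mul_singleton (S : Set G) (k : G) : μ (S * {k}) = μ S := by
  rw [Set.mul_singleton, Set.image_mul_right, measure_preimage_mul_right]

lemma measurableSet_mul_singleton (hS : MeasurableSet S) (k : G) : MeasurableSet (S * {k}) := by
  rw [Set.mul_singleton]
  exact (measurableEmbedding_mulRight k).measurableSet_image.2 hS

lemma setIntegral_mul_singleton (S : Set G) (k : G) (f : G → E) :
    ∫ g in S * {k}, f g ∂μ = ∫ g in S, f (g * k) ∂μ := by
  rw [Set.mul_singleton]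
  exact (measurePreserving_mul_right μ k).setIntegral_image_emb
    (measurableEmbedding_mulRight k) f S

lemma setAverage_mul_singleton (S : Set G) (k : G) (f : G → E) :
    ⨍ g in S * {k}, f g ∂μ = ⨍ g in S, f (g * k) ∂μ := by
  simp only [setAverage_eq, Measure.real, measure_mul_singleton, setIntegral_mul_singleton]

end Translates

section WeakAverages

lemma norm_add_smul_sub_sq {E : Type*} [SeminormedAddCommGroup E] [InnerProductSpace ℝ E]
    (v x : E) (t : ℝ) : ‖v + t • (x - v)‖ ^ 2 =
      ‖v‖ ^ 2 + 2 * t * (inner ℝ v x - ‖v‖ ^ 2) + t ^ 2 * ‖x - v‖ ^ 2 := by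
  rw [norm_add_sq_real, inner_smul_right, inner_sub_right, real_inner_self_eq_norm_sq,
    norm_smul, mul_pow, Real.norm_eq_abs, sq_abs]
  ring

lemma exists_forall_le_inner_of_zero_notMem_closure {E : Type*} [SeminormedAddCommGroup E]
    [InnerProductSpace ℝ E] {C : Set E} (hC : Convex ℝ C) (hCb : Bornology.IsBounded C)
    (h0 : (0 : E) ∉ closure C) : ∃ v : E, ∃ δ > 0, ∀ x ∈ C, δ ≤ inner ℝ v x := by
  obtain rfl | hne := C.eq_empty_or_nonempty
  · exact ⟨0, 1, one_pos, by simp⟩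
  obtain ⟨B, hB⟩ := hCb.exists_norm_le
  set d := Metric.infDist 0 C
  have hd : 0 < d := (Metric.infDist_pos_iff_notMem_closure hne).1 h0
  have hd_le {x : E} (hx : x ∈ C) : d ≤ ‖x‖ := by
    simpa using Metric.infDist_le_dist_of_mem (x := (0 : E)) hx
  set t := d ^ 2 / ((2 * B) ^ 2 + d ^ 2)
  have ht : 0 < t := by positivity
  have ht_le : t ≤ 1 := div_le_one_of_le₀ (by nlinarith) (by positivity)
  have htB : t * (2 * B) ^ 2 ≤ d ^ 2 := by
    calc t * (2 * B) ^ 2 ≤ t * ((2 * B) ^ 2 + d ^ 2) := by gcongr; nlinarith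
      _ = d ^ 2 := div_mul_cancel₀ _ (by positivity)
  obtain ⟨v, hv, hvd⟩ : ∃ v ∈ C, ‖v‖ ^ 2 < d ^ 2 + t * d ^ 2 / 2 := by
    have hlt : d < √(d ^ 2 + t * d ^ 2 / 2) :=
      Real.lt_sqrt_of_sq_lt (lt_add_of_pos_right _ (by positivity))
    obtain ⟨v, hv, hvd⟩ := (Metric.infDist_lt_iff hne).1 hlt
    rw [dist_zero_left] at hvd
    exact ⟨v, hv, (Real.lt_sqrt (norm_nonneg v)).1 hvd⟩
  -- Moving from the almost minimal `v` towards `x ∈ C` cannot decrease the norm below `d`.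
  refine ⟨v, d ^ 2 / 4, by positivity, fun x hx ↦ ?_⟩
  have hmem : v + t • (x - v) ∈ C := hC.add_smul_sub_mem hv hx ⟨ht.le, ht_le⟩
  have hsq : d ^ 2 ≤ ‖v + t • (x - v)‖ ^ 2 := by gcongr; exact hd_le hmem
  rw [norm_add_smul_sub_sq] at hsq
  have hxv : ‖x - v‖ ≤ 2 * B := by linarith [norm_sub_le x v, hB x hx, hB v hv]
  have hquad : t ^ 2 * ‖x - v‖ ^ 2 ≤ t * d ^ 2 := by
    calc t ^ 2 * ‖x - v‖ ^ 2 ≤ t ^ 2 * (2 * B) ^ 2 := by gcongr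
      _ = t * (t * (2 * B) ^ 2) := by ring
      _ ≤ t * d ^ 2 := by gcongr
  have hdv : d ^ 2 ≤ ‖v‖ ^ 2 := by gcongr; exact hd_le hv
  have : t * (d ^ 2 / 4) ≤ t * inner ℝ v x := by nlinarith
  exact le_of_mul_le_mul_left this ht

/-- A family of measurable subsets of `K`, indexed along a filter, over which averages can be taken:
eventually the sets have positive finite measure. -/
structure IsAveragingFamily {X ι : Type*} [MeasurableSpace X] (μ : Measure X) (K : Set X)
    (l : Filter ι) (Λ : ι → Set X) : Prop where
  measurableSet : ∀ i, MeasurableSet (Λ i)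
  subset : ∀ i, Λ i ⊆ K
  eventually_pos_and_lt_top : ∀ᶠ i in l, 0 < μ (Λ i) ∧ μ (Λ i) < ⊤

lemma zero_mem_closure_convexHull_image {X ι E : Type*} [MeasurableSpace X] {μ : Measure X}
    {K : Set X} [SeminormedAddCommGroup E] [InnerProductSpace ℂ E] {l : Filter ι} [l.NeBot]
    {Λ : ι → Set X} (hΛ : IsAveragingFamily μ K l Λ) {u : X → E} {B : ℝ} (hB : ∀ x, ‖u x‖ ≤ B)
    (hu : ∀ v, AEStronglyMeasurable (fun x ↦ inner ℂ v (u x)) (μ.restrict K))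
    (hlim : ∀ v, Tendsto (fun i ↦ ⨍ x in Λ i, inner ℂ v (u x) ∂μ) l (𝓝 0)) :
    0 ∈ closure (convexHull ℝ (u '' K)) := by
  let : InnerProductSpace ℝ E := InnerProductSpace.complexToReal
  by_contra h0
  have hbdd : Bornology.IsBounded (convexHull ℝ (u '' K)) :=
    isBounded_convexHull.2 (isBounded_iff_forall_norm_le.2 ⟨B, by rintro _ ⟨x, -, rfl⟩; exact hB x⟩)
  obtain ⟨v, δ, hδ, hv⟩ :=
    exists_forall_le_inner_of_zero_notMem_closure (convex_convexHull ℝ _) hbdd h0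
  have hclosed : IsClosed {z : ℂ | δ ≤ z.re} := isClosed_le continuous_const Complex.continuous_re
  have hmem : ∀ᶠ i in l, ⨍ x in Λ i, inner ℂ v (u x) ∂μ ∈ {z : ℂ | δ ≤ z.re} := by
    filter_upwards [hΛ.eventually_pos_and_lt_top] with i hi
    refine (convex_halfSpace_re_ge δ).set_average_mem hclosed hi.1.ne' hi.2.ne ?_ ?_
    · refine ae_restrict_of_forall_mem (hΛ.measurableSet i) fun x hx ↦ ?_
      exact hv _ (subset_convexHull ℝ _ ⟨x, hΛ.subset i hx, rfl⟩)
    · refine integrableOn_of_bound_of_subset (hΛ.subset i) hi.2.ne (hu v) (C := ‖v‖ * B) fun x ↦ ?_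
      exact (norm_inner_le_norm _ _).trans (by gcongr; exact hB x)
  have : δ ≤ 0 := hclosed.mem_of_tendsto (hlim v) hmem
  exact this.not_gt hδ

end WeakAverages

section MeanErgodic

/-- An averaging family in `K` is a Følner family if its sets are asymptotically invariant under
right translation by the elements of `K`. A Følner net is the case `l = atTop`. -/
structure IsFolnerFamily {G ι : Type*} [Group G] [MeasurableSpace G] (μ : Measure G) (K : Set G)
    (l : Filter ι) (Λ : ι → Set G) : Prop extends IsAveragingFamily μ K l Λ where
  tendsto_symmDiff : ∀ g ∈ K,
    Tendsto (fun i ↦ μ.real (symmDiff (Λ i) (Λ i * {g})) / μ.real (Λ i)) l (𝓝 0)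

lemma norm_inner_apply_le {G E : Type*} [Monoid G] [SeminormedAddCommGroup E]
    [InnerProductSpace ℂ E] (U : G →* (E →ₗᵢ[ℂ] E)) (v x : E) (g : G) :
    ‖inner ℂ v (U g x)‖ ≤ ‖v‖ * ‖x‖ :=
  (norm_inner_le_norm v (U g x)).trans_eq (by rw [(U g).norm_map])

variable {G ι E : Type*} [Group G] [MeasurableSpace G] {μ : Measure G} {K : Set G} {l : Filter ι}
  {Λ : ι → Set G} [SeminormedAddCommGroup E] [InnerProductSpace ℂ E] {U : G →* (E →ₗᵢ[ℂ] E)}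

lemma IsAveragingFamily.integrableOn_inner_apply (hΛ : IsAveragingFamily μ K l Λ)
    (hU : ∀ v x, AEStronglyMeasurable (fun g ↦ inner ℂ v (U g x)) (μ.restrict K)) {i : ι}
    (hi : μ (Λ i) ≠ ⊤) (v x : E) : IntegrableOn (fun g ↦ inner ℂ v (U g x)) (Λ i) μ :=
  integrableOn_of_bound_of_subset (hΛ.subset i) hi (hU v x) (norm_inner_apply_le U v x)

/-- The vectors `x` whose orbit averages `⨍ g in Λ i, U g x` tend to `0` in norm. The orbits are
only weakly measurable, so the norm is expressed by testing uniformly against all vectors `v`. -/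
noncomputable def meanNullSubmodule (hΛ : IsAveragingFamily μ K l Λ)
    (hU : ∀ v x, AEStronglyMeasurable (fun g ↦ inner ℂ v (U g x)) (μ.restrict K)) :
    Submodule ℂ E where
  carrier := {x | ∀ ε > 0, ∀ᶠ i in l, ∀ v, ‖⨍ g in Λ i, inner ℂ v (U g x) ∂μ‖ ≤ ε * ‖v‖}
  zero_mem' ε hε := .of_forall fun i v ↦ by
    simp only [map_zero, inner_zero_right, average_zero, norm_zero]
    positivity
  add_mem' {x y} hx hy ε hε := by
    filter_upwards [hx (ε / 2) (half_pos hε), hy (ε / 2) (half_pos hε),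
      hΛ.eventually_pos_and_lt_top] with i hxi hyi hi v
    simp only [map_add, inner_add_right]
    rw [setAverage_add (hΛ.integrableOn_inner_apply hU hi.2.ne v x)
      (hΛ.integrableOn_inner_apply hU hi.2.ne v y)]
    linarith [norm_add_le_of_le (hxi v) (hyi v)]
  smul_mem' c x hx ε hε := by
    filter_upwards [hx (ε / (‖c‖ + 1)) (by positivity)] with i hi v
    simp only [map_smul, inner_smul_right, setAverage_eq, integral_const_mul] at hi ⊢
    rw [← mul_smul_comm, norm_mul]
    calc ‖c‖ * _ ≤ (‖c‖ + 1) * (ε / (‖c‖ + 1) * ‖v‖) := by gcongr; exacts [by simp, hi v]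
      _ = ε * ‖v‖ := by field_simp

lemma isClosed_meanNullSubmodule (hΛ : IsAveragingFamily μ K l Λ)
    (hU : ∀ v x, AEStronglyMeasurable (fun g ↦ inner ℂ v (U g x)) (μ.restrict K)) :
    IsClosed (meanNullSubmodule hΛ hU : Set E) := by
  refine isClosed_of_closure_subset fun x hx ε hε ↦ ?_
  obtain ⟨z, hz, hxz⟩ := Metric.mem_closure_iff.1 hx (ε / 2) (half_pos hε)
  filter_upwards [hz (ε / 2) (half_pos hε), hΛ.eventually_pos_and_lt_top] with i hzi hi v
  have hdiff : ‖⨍ g in Λ i, inner ℂ v (U g (x - z)) ∂μ‖ ≤ ‖v‖ * (ε / 2) := by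
    refine norm_setAverage_le_of_norm_le hi.2.ne (by positivity) fun g _ ↦ ?_
    exact (norm_inner_apply_le U v _ g).trans (by rw [← dist_eq_norm]; gcongr)
  simp only [map_sub, inner_sub_right] at hdiff
  rw [setAverage_sub (hΛ.integrableOn_inner_apply hU hi.2.ne v x)
    (hΛ.integrableOn_inner_apply hU hi.2.ne v z)] at hdiff
  linarith [norm_le_norm_sub_add (⨍ g in Λ i, inner ℂ v (U g x) ∂μ)
    (⨍ g in Λ i, inner ℂ v (U g z) ∂μ), hzi v]

variable [MeasurableMul G] [μ.IsMulRightInvariant]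

lemma IsFolnerFamily.sub_apply_mem_meanNullSubmodule (hK : ∀ g ∈ K, ∀ h ∈ K, g * h ∈ K)
    (hΛ : IsFolnerFamily μ K l Λ)
    (hU : ∀ v x, AEStronglyMeasurable (fun g ↦ inner ℂ v (U g x)) (μ.restrict K)) {k : G}
    (hk : k ∈ K) (x : E) :
    x - U k x ∈ meanNullSubmodule hΛ.toIsAveragingFamily hU := by
  intro ε hε
  have hsmall : Tendsto
      (fun i ↦ ‖x‖ * (μ.real (symmDiff (Λ i) (Λ i * {k})) / μ.real (Λ i))) l (𝓝 0) := by
    simpa using (hΛ.tendsto_symmDiff k hk).const_mul ‖x‖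
  filter_upwards [hsmall.eventually_le_const hε, hΛ.eventually_pos_and_lt_top] with i hεi hi v
  have hfin : μ (Λ i * {k}) ≠ ⊤ := by rw [measure_mul_singleton]; exact hi.2.ne
  have hint := hΛ.integrableOn_inner_apply hU hi.2.ne v
  have hshift : ∫ g in Λ i, inner ℂ v (U g (U k x)) ∂μ =
      ∫ g in Λ i * {k}, inner ℂ v (U g x) ∂μ := by
    simp only [setIntegral_mul_singleton, map_mul, LinearIsometry.coe_mul,
      Function.comp_apply]
  calc ‖⨍ g in Λ i, inner ℂ v (U g (x - U k x)) ∂μ‖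
      = (μ.real (Λ i))⁻¹ * ‖∫ g in Λ i, inner ℂ v (U g x) ∂μ -
          ∫ g in Λ i * {k}, inner ℂ v (U g x) ∂μ‖ := by
        simp only [map_sub, inner_sub_right]
        rw [setAverage_eq, integral_sub (hint x) (hint _), hshift, norm_smul,
          Real.norm_of_nonneg (by positivity)]
    _ ≤ (μ.real (Λ i))⁻¹ * (‖v‖ * ‖x‖ * μ.real (symmDiff (Λ i) (Λ i * {k}))) := by
        gcongr
        exact norm_setIntegral_sub_setIntegral_le (hΛ.measurableSet i)
          (measurableSet_mul_singleton (hΛ.measurableSet i) k) hi.2.ne hfin (hint x)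
          (integrableOn_of_bound_of_subset (mul_singleton_subset hK (hΛ.subset i) hk) hfin
            (hU v x) (norm_inner_apply_le U v x)) (norm_inner_apply_le U v x)
    _ = ‖x‖ * (μ.real (symmDiff (Λ i) (Λ i * {k})) / μ.real (Λ i)) * ‖v‖ := by ring
    _ ≤ ε * ‖v‖ := by gcongr

lemma IsFolnerFamily.mem_meanNullSubmodule (hK : ∀ g ∈ K, ∀ h ∈ K, g * h ∈ K)
    (hΛ : IsFolnerFamily μ K l Λ)
    (hU : ∀ v x, AEStronglyMeasurable (fun g ↦ inner ℂ v (U g x)) (μ.restrict K)) {y : E}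
    (hy : 0 ∈ closure (convexHull ℝ ((U · y) '' K))) :
    y ∈ meanNullSubmodule hΛ.toIsAveragingFamily hU := by
  set N := meanNullSubmodule hΛ.toIsAveragingFamily hU
  have hclosed : IsClosed {z | y - z ∈ N} :=
    (isClosed_meanNullSubmodule hΛ.toIsAveragingFamily hU).preimage (continuous_sub_left y)
  have hconvex : Convex ℝ {z | y - z ∈ N} := fun z hz w hw s t _ _ hst ↦ by
    have : y - (s • z + t • w) = s • (y - z) + t • (y - w) := by
      rw [smul_sub, smul_sub, sub_add_sub_comm, ← add_smul, hst, one_smul]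
    rw [Set.mem_ofPred_eq, this]
    exact (N.restrictScalars ℝ).add_mem ((N.restrictScalars ℝ).smul_mem s hz)
      ((N.restrictScalars ℝ).smul_mem t hw)
  have horbit : (U · y) '' K ⊆ {z | y - z ∈ N} := by
    rintro _ ⟨k, hk, rfl⟩
    exact hΛ.sub_apply_mem_meanNullSubmodule hK hU hk y
  simpa using hclosed.closure_subset_iff.2 (convexHull_min horbit hconvex) hy

/-- **Mean ergodic theorem**, in the form that upgrades weak convergence along one averaging family
to norm convergence along every Følner family. -/
theorem IsFolnerFamily.eventually_norm_setAverage_inner_apply_sub_le {ι₀ : Type*} {l₀ : Filter ι₀}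
    [l₀.NeBot] {Λ₀ : ι₀ → Set G} (hK : ∀ g ∈ K, ∀ h ∈ K, g * h ∈ K) (hΛ : IsFolnerFamily μ K l Λ)
    (hU : ∀ v x, AEStronglyMeasurable (fun g ↦ inner ℂ v (U g x)) (μ.restrict K))
    (hΛ₀ : IsAveragingFamily μ K l₀ Λ₀) {x p : E} (hp : ∀ g, U g p = p)
    (hlim : ∀ v, Tendsto (fun i ↦ ⨍ g in Λ₀ i, inner ℂ v (U g x) ∂μ) l₀ (𝓝 (inner ℂ v p)))
    {ε : ℝ} (hε : 0 < ε) :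
    ∀ᶠ i in l, ∀ v, ‖⨍ g in Λ i, inner ℂ v (U g x) ∂μ - inner ℂ v p‖ ≤ ε * ‖v‖ := by
  have hcenter (v : E) {S : Set G} (hSK : S ⊆ K) (hS : 0 < μ S ∧ μ S < ⊤) :
      ⨍ g in S, inner ℂ v (U g (x - p)) ∂μ = ⨍ g in S, inner ℂ v (U g x) ∂μ - inner ℂ v p := by
    simp only [map_sub, hp, inner_sub_right]
    exact setAverage_sub_const hS.1.ne' hS.2.ne
      (integrableOn_of_bound_of_subset hSK hS.2.ne (hU v x) (norm_inner_apply_le U v x)) _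
  have hlim₀ (v : E) : Tendsto (fun i ↦ ⨍ g in Λ₀ i, inner ℂ v (U g (x - p)) ∂μ) l₀ (𝓝 0) := by
    rw [← sub_self (inner ℂ v p)]
    refine ((hlim v).sub_const _).congr' ?_
    filter_upwards [hΛ₀.eventually_pos_and_lt_top] with i hi
    exact (hcenter v (hΛ₀.subset i) hi).symm
  have hnull := hΛ.mem_meanNullSubmodule hK hU (y := x - p) <|
    zero_mem_closure_convexHull_image hΛ₀ (fun g ↦ ((U g).norm_map _).le) (hU · _) hlim₀
  filter_upwards [hnull ε hε, hΛ.eventually_pos_and_lt_top] with i hεi hi v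
  rw [← hcenter v (hΛ.subset i) hi]
  exact hεi v

end MeanErgodic

section Koopman

variable {A G : Type*} [CStarAlgebra A] [PartialOrder A] [StarOrderedRing A] {ω : A →ₚ[ℂ] ℂ}

lemma norm_toPreGNS_mul_le (ω : A →ₚ[ℂ] ℂ) (a x : A) :
    ‖ω.toPreGNS (a * x)‖ ≤ ‖a‖ * ‖ω.toPreGNS x‖ :=
  (ω.leftMulMapPreGNS a).le_of_opNorm_le
    (LinearMap.mkContinuous_norm_le _ (norm_nonneg a) _) (ω.toPreGNS x)

variable [Monoid G]

/-- The Koopman representation of an `ω`-preserving action: the isometries of the pre-Hilbert space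
of the GNS construction induced by the automorphisms `τ g`. -/
noncomputable def koopman (τ : G →* (A ≃⋆ₐ[ℂ] A)) (hω : ∀ g a, ω (τ g a) = ω a) :
    G →* (ω.PreGNS →ₗᵢ[ℂ] ω.PreGNS) where
  toFun g :=
    { toLinearMap :=
        ω.toPreGNS.toLinearMap ∘ₗ (τ g).toAlgEquiv.toLinearMap ∘ₗ ω.ofPreGNS.toLinearMap
      norm_map' x := by simp [PositiveLinearMap.preGNS_norm_def, ← map_star, ← map_mul, hω] }
  map_one' := by ext x; simp
  map_mul' g h := by ext x; simp

lemma koopman_toPreGNS {τ : G →* (A ≃⋆ₐ[ℂ] A)} (hω : ∀ g a, ω (τ g a) = ω a) (g : G) (a : A) :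
    koopman τ hω g (ω.toPreGNS a) = ω.toPreGNS (τ g a) :=
  rfl

lemma norm_toPreGNS_apply {τ : G →* (A ≃⋆ₐ[ℂ] A)} (hω : ∀ g a, ω (τ g a) = ω a) (g : G) (a : A) :
    ‖ω.toPreGNS (τ g a)‖ = ‖ω.toPreGNS a‖ :=
  (koopman τ hω g).norm_map (ω.toPreGNS a)

lemma inner_koopman {τ : G →* (A ≃⋆ₐ[ℂ] A)} (hω : ∀ g a, ω (τ g a) = ω a) (v : ω.PreGNS) (b : A)
    (g : G) :
    inner ℂ v (koopman τ hω g (ω.toPreGNS b)) = ω (star (ω.ofPreGNS v) * τ g b) :=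
  rfl

lemma norm_apply_mul_map_le {τ : G →* (A ≃⋆ₐ[ℂ] A)} (hω : ∀ g a, ω (τ g a) = ω a) (a b : A)
    (g : G) : ‖ω (a * τ g b)‖ ≤ ‖ω.toPreGNS (star a)‖ * ‖ω.toPreGNS b‖ := by
  simpa [inner_koopman] using
    norm_inner_apply_le (koopman τ hω) (ω.toPreGNS (star a)) (ω.toPreGNS b) g

end Koopman

section Invariance

variable {A G : Type*} [CStarAlgebra A] [PartialOrder A] [Group G] {ω : A →ₚ[ℂ] ℂ}
  {τ : G →* (A ≃⋆ₐ[ℂ] A)}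

lemma apply_mul_map_mul (hω : ∀ g a, ω (τ g a) = ω a) (a b : A) (k g : G) :
    ω (a * τ (k * g) b) = ω (τ k⁻¹ a * τ g b) := by
  rw [← hω k⁻¹, map_mul (τ k⁻¹), ← StarAlgEquiv.mul_apply, ← map_mul τ, inv_mul_cancel_left]

lemma apply_mul_map_inv [StarOrderedRing A] (hω : ∀ g a, ω (τ g a) = ω a) (a b : A) (g : G) :
    ω (a * τ g⁻¹ b) = star (ω (star b * τ g (star a))) := by
  rw [← map_star, star_mul, star_star, map_star, star_star, ← hω g (a * _), map_mul (τ g),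
    ← StarAlgEquiv.mul_apply, ← map_mul τ, mul_inv_cancel, map_one, StarAlgEquiv.one_apply]

lemma apply_map_mul_map_mul_map {G : Type*} [CommGroup G] {τ : G →* (A ≃⋆ₐ[ℂ] A)}
    (hω : ∀ g a, ω (τ g a) = ω a) (a b c : A) (g h : G) :
    ω (τ g a * τ (g * h) b * τ h c) = ω (τ h⁻¹ (a * τ h b) * τ g⁻¹ c) := by
  rw [← apply_mul_map_mul hω, mul_comm h, apply_mul_map_mul hω, inv_inv, map_mul (τ g),
    ← StarAlgEquiv.mul_apply, ← map_mul τ]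

end Invariance

section Ergodicity

variable {A G ι ι₀ : Type*} [CStarAlgebra A] [PartialOrder A] [StarOrderedRing A]
  {ω : A →ₚ[ℂ] ℂ} [CommGroup G] [MeasurableSpace G] {μ : Measure G} {K : Set G} {l : Filter ι}
  {Λ : ι → Set G} {l₀ : Filter ι₀} {Λ₀ : ι₀ → Set G} {τ : G →* (A ≃⋆ₐ[ℂ] A)}

/-- The action `τ` on `K` preserves the positive functional `ω`, is weakly measurable, and is
ergodic along the averaging family `Λ` in `K`. -/
structure IsErgodicAlong_s3 (μ : Measure G) (K : Set G) (l : Filter ι) (Λ : ι → Set G)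
    (ω : A →ₚ[ℂ] ℂ) (τ : G →* (A ≃⋆ₐ[ℂ] A)) : Prop extends IsAveragingFamily μ K l Λ where
  apply_map : ∀ g a, ω (τ g a) = ω a
  aestronglyMeasurable : ∀ a b, AEStronglyMeasurable (fun g ↦ ω (a * τ g b)) (μ.restrict K)
  tendsto_setAverage : ∀ a b,
    Tendsto (fun i ↦ ⨍ g in Λ i, ω (a * τ g b) ∂μ) l (𝓝 (ω a * ω b))

lemma IsErgodicAlong_s3.inv (h : IsErgodicAlong_s3 μ K l Λ ω τ) :
    IsErgodicAlong_s3 μ K l Λ ω (τ.comp invMonoidHom) where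
  toIsAveragingFamily := h.toIsAveragingFamily
  apply_map g a := h.apply_map g⁻¹ a
  aestronglyMeasurable a b := by
    simp only [MonoidHom.comp_apply, invMonoidHom_apply, apply_mul_map_inv h.apply_map]
    exact continuous_star.comp_aestronglyMeasurable (h.aestronglyMeasurable _ _)
  tendsto_setAverage a b := by
    have hstar : ω a * ω b = star (ω (star b) * ω (star a)) := by
      rw [star_mul, ← map_star, ← map_star, star_star, star_star]
    rw [hstar]
    refine (h.tendsto_setAverage (star b) (star a)).star.congr fun i ↦ ?_
    simp only [MonoidHom.comp_apply, invMonoidHom_apply, apply_mul_map_inv h.apply_map]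
    exact (integral_conj (f := fun g ↦ ω (star b * τ g (star a)))).symm

variable [MeasurableMul G] [μ.IsMulRightInvariant]

theorem IsErgodicAlong_s3.eventually_norm_setAverage_sub_le [l₀.NeBot]
    (h : IsErgodicAlong_s3 μ K l₀ Λ₀ ω τ) (hK : ∀ g ∈ K, ∀ h ∈ K, g * h ∈ K)
    (hΛ : IsFolnerFamily μ K l Λ) (b : A) {ε : ℝ} (hε : 0 < ε) :
    ∀ᶠ i in l, ∀ a k,
      ‖⨍ g in Λ i * {k}, ω (a * τ g b) ∂μ - ω a * ω b‖ ≤ ε * ‖ω.toPreGNS (star a)‖ := by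
  have hinner (v : ω.PreGNS) :
      inner ℂ v (ω.toPreGNS (ω b • 1)) = ω (star (ω.ofPreGNS v)) * ω b := by
    simp [PositiveLinearMap.preGNS_inner_def, mul_comm]
  have hfixed (g : G) :
      koopman τ h.apply_map g (ω.toPreGNS (ω b • 1)) = ω.toPreGNS (ω b • 1) := by
    rw [koopman_toPreGNS, map_smul, map_one]
  have hmean := hΛ.eventually_norm_setAverage_inner_apply_sub_le hK
    (fun v x ↦ h.aestronglyMeasurable (star (ω.ofPreGNS v)) (ω.ofPreGNS x)) h.toIsAveragingFamily
    hfixed (x := ω.toPreGNS b) (fun v ↦ by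
      simp only [inner_koopman, hinner]
      exact h.tendsto_setAverage _ b) hε
  filter_upwards [hmean] with i hi a k
  specialize hi (ω.toPreGNS (star (τ k⁻¹ a)))
  simp only [inner_koopman, hinner, PositiveLinearMap.ofPreGNS_toPreGNS, star_star] at hi
  simpa only [setAverage_mul_singleton, mul_comm _ k, apply_mul_map_mul h.apply_map,
    h.apply_map, ← map_star, norm_toPreGNS_apply h.apply_map] using hi

end Ergodicity

section TripleProducts

variable {A G ι ι₀ : Type*} [CStarAlgebra A] [PartialOrder A] [StarOrderedRing A] {ω : A →ₚ[ℂ] ℂ}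
  [CommGroup G] {τ : G →* (A ≃⋆ₐ[ℂ] A)} [MeasurableSpace G]
  {μ : Measure G}

lemma norm_setAverage_triple_sub_le (hω : ∀ g a, ω (τ g a) = ω a) {T : Set G} {c : A} {δ : ℝ}
    (hδ : 0 ≤ δ)
    (hT : ∀ x, ‖⨍ g in T, ω (x * τ g⁻¹ c) ∂μ - ω x * ω c‖ ≤ δ * ‖ω.toPreGNS (star x)‖)
    (a b : A) (h : G) :
    ‖⨍ g in T, ω (τ g a * τ (g * h) b * τ h c) ∂μ - ω (a * τ h b) * ω c‖ ≤
      δ * (‖b‖ * ‖ω.toPreGNS (star a)‖) := by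
  have hnorm : ‖ω.toPreGNS (star (τ h⁻¹ (a * τ h b)))‖ ≤ ‖b‖ * ‖ω.toPreGNS (star a)‖ := by
    rw [← map_star, norm_toPreGNS_apply hω, star_mul, ← map_star]
    exact (norm_toPreGNS_mul_le ω _ _).trans_eq (by rw [StarAlgEquiv.norm_map, norm_star])
  simp only [apply_map_mul_map_mul_map hω, ← hω h⁻¹ (a * τ h b)]
  exact (hT _).trans (by gcongr)

lemma norm_setAverage_setAverage_triple_sub_le (hω : ∀ g a, ω (τ g a) = ω a) {S T : Set G}
    {a b c : A} {δ : ℝ} (hδ : 0 ≤ δ) (hSfin : μ S ≠ ⊤)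
    (hSint : IntegrableOn (fun h ↦ ω (a * τ h b)) S μ)
    (hTmeas : AEStronglyMeasurable
      (fun h ↦ ⨍ g in T, ω (τ g a * τ (g * h) b * τ h c) ∂μ) (μ.restrict S))
    (hS : ‖⨍ h in S, ω (a * τ h b) ∂μ - ω a * ω b‖ ≤ δ * ‖ω.toPreGNS (star a)‖)
    (hT : ∀ x, ‖⨍ g in T, ω (x * τ g⁻¹ c) ∂μ - ω x * ω c‖ ≤ δ * ‖ω.toPreGNS (star x)‖) :
    ‖⨍ h in S, ⨍ g in T, ω (τ g a * τ (g * h) b * τ h c) ∂μ ∂μ - ω a * ω b * ω c‖ ≤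
      δ * (‖ω.toPreGNS (star a)‖ * (‖b‖ + ‖ω c‖)) := by
  refine (norm_setAverage_sub_mul_le hSfin hTmeas hSint (by positivity)
    (norm_setAverage_triple_sub_le hω hδ hT a b) hS).trans_eq ?_
  ring

variable [MeasurableMul G] [μ.IsMulRightInvariant] {K : Set G} {l : Filter ι} {Λ₁ Λ₂ : ι → Set G}
  {l₀ : Filter ι₀} [l₀.NeBot] {Λ₀ : ι₀ → Set G}

theorem IsErgodicAlong_s3.eventually_norm_setAverage_setAverage_triple_sub_le
    (h : IsErgodicAlong_s3 μ K l₀ Λ₀ ω τ) (hKmeas : MeasurableSet K)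
    (hK : ∀ g ∈ K, ∀ h ∈ K, g * h ∈ K) (hΛ₁ : IsFolnerFamily μ K l Λ₁)
    (hΛ₂ : IsFolnerFamily μ K l Λ₂) {a b c : A}
    (hmeas : Measurable fun p : K × K ↦
      ω (τ (p.2 : G) a * τ ((p.1 : G) * (p.2 : G)) b * τ (p.1 : G) c))
    {ε : ℝ} (hε : 0 < ε) :
    ∀ᶠ i in l, ∀ k₁ ∈ K, ∀ k₂ ∈ K,
      ‖⨍ h in Λ₁ i * {k₁}, ⨍ g in Λ₂ i * {k₂}, ω (τ g a * τ (g * h) b * τ h c) ∂μ ∂μ -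
        ω a * ω b * ω c‖ ≤ ε := by
  set C := ‖ω.toPreGNS (star a)‖ * (‖b‖ + ‖ω c‖)
  have hC : 0 ≤ C := by positivity
  obtain ⟨δ, hδ, hδC⟩ : ∃ δ > 0, δ * C ≤ ε :=
    ⟨ε / (C + 1), by positivity, by rw [div_mul_eq_mul_div₀, div_le_iff₀] <;> nlinarith⟩
  filter_upwards [h.eventually_norm_setAverage_sub_le hK hΛ₁ b hδ,
    h.inv.eventually_norm_setAverage_sub_le hK hΛ₂ c hδ,
    hΛ₁.eventually_pos_and_lt_top, hΛ₂.eventually_pos_and_lt_top]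
    with i hi₁ hi₂ hfin₁ hfin₂ k₁ hk₁ k₂ hk₂
  have hfin₁' : μ (Λ₁ i * {k₁}) ≠ ⊤ := by rw [measure_mul_singleton]; exact hfin₁.2.ne
  have hfin₂' : μ (Λ₂ i * {k₂}) ≠ ⊤ := by rw [measure_mul_singleton]; exact hfin₂.2.ne
  have hsub₁ := mul_singleton_subset hK (hΛ₁.subset i) hk₁
  have hsub₂ := mul_singleton_subset hK (hΛ₂.subset i) hk₂
  refine (norm_setAverage_setAverage_triple_sub_le h.apply_map hδ.le hfin₁' ?_ ?_ (hi₁ a k₁)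
    fun x ↦ hi₂ x k₂).trans hδC
  · exact integrableOn_of_bound_of_subset hsub₁ hfin₁' (h.aestronglyMeasurable a b)
      (norm_apply_mul_map_le h.apply_map a b)
  · exact aestronglyMeasurable_setAverage hKmeas hKmeas (by simpa only [mul_comm] using hmeas)
      hsub₁ (measurableSet_mul_singleton (hΛ₁.measurableSet i) k₁) hsub₂
      (measurableSet_mul_singleton (hΛ₂.measurableSet i) k₂) hfin₂'

end TripleProducts

section UnbundledSystems

lemma setAverage_setAverage_mul_singleton {G E : Type*} [Group G] [MeasurableSpace G]
    [MeasurableMul G] {μ : Measure G} [μ.IsMulRightInvariant] [NormedAddCommGroup E]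
    [NormedSpace ℝ E] (S T : Set G) (k₁ k₂ : G) (f : G → G → E) :
    ⨍ h in S * {k₁}, ⨍ g in T * {k₂}, f h g ∂μ ∂μ =
      (μ.real S * μ.real T)⁻¹ • ∫ h in S * {k₁}, ∫ g in T * {k₂}, f h g ∂μ ∂μ := by
  simp only [setAverage_eq, integral_smul, Measure.real, measure_mul_singleton, smul_smul, mul_inv]

theorem prop_4_3_1_general {A : Type*} [CStarAlgebra A] (ω : A →ₗ[ℂ] ℂ)
    (hω_pos : ∀ a : A, 0 ≤ ω (star a * a)) {G : Type*} [CommGroup G] [MeasurableSpace G]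
    (μ : Measure G) (hTrans : ∀ (V : Set G) (g : G), MeasurableSet V → MeasurableSet (V * {g}))
    (hRight : ∀ (V : Set G) (g : G), MeasurableSet V → μ (V * {g}) = μ V)
    (K : Set G) (hKmeas : MeasurableSet K) (hKmul : ∀ g ∈ K, ∀ h ∈ K, g * h ∈ K)
    (τ : G → A ≃⋆ₐ[ℂ] A) (hτ_mul : ∀ g h a, τ g (τ h a) = τ (g * h) a)
    (hω_inv : ∀ g a, ω (τ g a) = ω a)
    (hτ_meas : ∀ a b : A, Measurable fun g : K ↦ ω (a * τ (g : G) b))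
    {ι₀ : Type*} {l₀ : Filter ι₀} [l₀.NeBot] {Λ₀ : ι₀ → Set G} (hΛ₀ : IsAveragingFamily μ K l₀ Λ₀)
    (hErg : ∀ a b : A, Tendsto (fun i ↦ ⨍ g in Λ₀ i, ω (a * τ g b) ∂μ) l₀ (𝓝 (ω a * ω b)))
    (hmeas2 : ∀ a b c : A, Measurable fun p : K × K ↦
      ω (τ (p.2 : G) a * τ ((p.1 : G) * (p.2 : G)) b * τ (p.1 : G) c))
    {ι : Type*} {l : Filter ι} {Λ₁ Λ₂ : ι → Set G} (hΛ₁ : IsFolnerFamily μ K l Λ₁)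
    (hΛ₂ : IsFolnerFamily μ K l Λ₂) (a b c : A) (ε : ℝ) (hε : 0 < ε) :
    ∀ᶠ i in l, ∀ k₁ ∈ K, ∀ k₂ ∈ K,
      ‖(μ.real (Λ₁ i) * μ.real (Λ₂ i))⁻¹ •
          (∫ h in Λ₁ i * {k₁}, ∫ g in Λ₂ i * {k₂}, ω (τ g a * τ (g * h) b * τ h c) ∂μ ∂μ) -
        ω a * ω b * ω c‖ ≤ ε := by
  let := CStarAlgebra.spectralOrder A
  have := CStarAlgebra.spectralOrderedRing A
  have := measurableMul_of_measurableSet_mul_singleton hTrans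
  have := isMulRightInvariant_of_measure_mul_singleton hRight
  let φ : A →ₚ[ℂ] ℂ := .mk₀ ω fun a ha ↦ by
    obtain ⟨x, rfl⟩ := CStarAlgebra.nonneg_iff_eq_star_mul_self.1 ha
    exact hω_pos x
  let σ : G →* (A ≃⋆ₐ[ℂ] A) := .mk' τ fun g h ↦ StarAlgEquiv.ext fun a ↦ (hτ_mul g h a).symm
  have hsystem : IsErgodicAlong_s3 μ K l₀ Λ₀ φ σ :=
    ⟨hΛ₀, hω_inv, fun a b ↦ aestronglyMeasurable_restrict_of_measurable_subtype hKmeas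
      (hτ_meas a b), hErg⟩
  simp only [← setAverage_setAverage_mul_singleton]
  exact hsystem.eventually_norm_setAverage_setAverage_triple_sub_le hKmeas hKmul hΛ₁ hΛ₂
    (hmeas2 a b c) hε

end UnbundledSystems

/-- **Proposition 4.3(1).** Let `(A, ω, τ, K)` be an ergodic C*-dynamical system and
`(Λ1 α)`, `(Λ2 α)` Følner nets in `K` over the same directed set.  If
`(g, h) ↦ ω (τ_h(a) τ_{gh}(b) τ_g(c))` is `(Σ|_K × Σ|_K)`-measurable for all `a b c`, then
`lim_α sup_{g₁ g₂ ∈ K} |M_{α,g₁,g₂}(ω (τ_g(a) τ_{gh}(b) τ_h(c))) − ω(a)ω(b)ω(c)| = 0`. -/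
theorem prop_4_3_1
    -- a unital C*-algebra A
    {A : Type*} [NormedRing A] [StarRing A] [CStarRing A] [NormedAlgebra ℂ A]
    [CompleteSpace A] [StarModule ℂ A]
    -- a state ω on A
    (ω : A →ₗ[ℂ] ℂ) (hω_pos : ∀ a : A, 0 ≤ ω (star a * a)) (hω_one : ω 1 = 1)
    -- a right invariant measure group (G, Σ, μ) with G abelian
    {G : Type*} [CommGroup G] [MeasurableSpace G] (μ : Measure G)
    (hTrans : ∀ (V : Set G) (g : G), MeasurableSet V → MeasurableSet (V * {g}))
    (hRight : ∀ (V : Set G) (g : G), MeasurableSet V → μ (V * {g}) = μ V)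
    (hInvMeas : Measurable (fun g : G => g⁻¹))
    (hInvInv : ∀ V : Set G, MeasurableSet V → μ V⁻¹ = μ V)
    -- K is a Følner semigroup in G
    (K : Set G) (hKmeas : MeasurableSet K) (hKmul : ∀ g ∈ K, ∀ h ∈ K, g * h ∈ K)
    -- the action τ, making (A, ω, τ, K) a C*-dynamical system
    (τ : G → A ≃⋆ₐ[ℂ] A)
    (hτ_one : ∀ a : A, τ 1 a = a)
    (hτ_mul : ∀ g h a, τ g (τ h a) = τ (g * h) a)
    (hω_inv : ∀ g a, ω (τ g a) = ω a)
    (hτ_meas : ∀ a b : A, Measurable fun g : K => ω (a * τ (g : G) b))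
    -- the system is ergodic (w.r.t. some, equivalently every, Følner net in K)
    (hErg : ∃ F : FolnerNetIn μ K, F.ErgodicAlong ω τ)
    -- the measurability hypothesis: (g,h) ↦ ω(τ_h(a) τ_{gh}(b) τ_g(c)) on K × K
    (hmeas2 : ∀ a b c : A, Measurable fun p : K × K =>
      ω (τ (p.2 : G) a * τ ((p.1 : G) * (p.2 : G)) b * τ (p.1 : G) c))
    -- Følner nets (Λ1 α), (Λ2 α) in K indexed by the same directed set
    {ι : Type*} [Preorder ι] [Nonempty ι] [IsDirected ι (· ≤ ·)]
    (Λ1 Λ2 : ι → Set G)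
    (hΛ1 : ∀ α, MeasurableSet (Λ1 α) ∧ Λ1 α ⊆ K)
    (hΛ1fin : ∀ᶠ α in atTop, 0 < μ (Λ1 α) ∧ μ (Λ1 α) < ⊤)
    (hΛ1folner : ∀ g ∈ K, Tendsto
      (fun α => (μ (symmDiff (Λ1 α) (Λ1 α * {g}))).toReal / (μ (Λ1 α)).toReal) atTop (𝓝 0))
    (hΛ2 : ∀ α, MeasurableSet (Λ2 α) ∧ Λ2 α ⊆ K)
    (hΛ2fin : ∀ᶠ α in atTop, 0 < μ (Λ2 α) ∧ μ (Λ2 α) < ⊤)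
    (hΛ2folner : ∀ g ∈ K, Tendsto
      (fun α => (μ (symmDiff (Λ2 α) (Λ2 α * {g}))).toReal / (μ (Λ2 α)).toReal) atTop (𝓝 0)) :
    -- conclusion, with the `lim sup = 0` expressed in ε-form
    ∀ a b c : A, ∀ ε > (0 : ℝ), ∀ᶠ α in atTop, ∀ g₁ ∈ K, ∀ g₂ ∈ K,
      ‖((μ (Λ1 α)).toReal * (μ (Λ2 α)).toReal)⁻¹ •
          (∫ h in Λ1 α * {g₁}, ∫ g in Λ2 α * {g₂}, ω (τ g a * τ (g * h) b * τ h c) ∂μ ∂μ)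
        - ω a * ω b * ω c‖ ≤ ε := by
  let : CStarAlgebra A := {}
  obtain ⟨F, hF⟩ := hErg
  exact prop_4_3_1_general ω hω_pos μ hTrans hRight K hKmeas hKmul τ hτ_mul hω_inv hτ_meas
    ⟨fun i ↦ (F.meas i).1, fun i ↦ (F.meas i).2, F.fin⟩
    (fun a b ↦ by simpa only [setAverage_eq, Measure.real] using hF a b) hmeas2
    ⟨⟨fun i ↦ (hΛ1 i).1, fun i ↦ (hΛ1 i).2, hΛ1fin⟩, hΛ1folner⟩
    ⟨⟨fun i ↦ (hΛ2 i).1, fun i ↦ (hΛ2 i).2, hΛ2fin⟩, hΛ2folner⟩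
end

section
/- (uniform van der Corput lemma) Let G' be a second countable topological group whose counting measure μ' on the Borel σ-algebra Σ' is right invariant, let K' ⊆ G' be a Borel measurable abelian subsemigroup, and let (Λ'_n) be a uniform Følner sequence in K' (so Λ'_n is a finite non-empty set for n large enough). Let H be a Hilbert space and f : G' → H a bounded function such that ⟨f(·), x⟩ is Borel measurable for all x ∈ H and ⟨f(·), f(·)⟩ : G' × G' → ℂ is Borel measurable. Assume γ_h := lim_{n→∞} (1/μ'(Λ'_n)) Σ_{g ∈ Λ'_n} ⟨f(g), f(gh)⟩ exists for all h ∈ G', that lim_{m→∞} (1/μ'(Λ'_m)²) Σ_{h₁ ∈ Λ'_m} Σ_{h₂ ∈ Λ'_m} γ_{h₁⁻¹h₂} = 0, and that lim_{n→∞} sup_{g₁ ∈ K'} | (1/μ'(Λ'_n)) Σ_{g ∈ Λ'_n g₁} ⟨f(g), f(gh)⟩ − γ_h | = 0 for all h ∈ G'. Then lim_{n→∞} sup_{g₁ ∈ K'} ‖ (1/μ'(Λ'_n)) Σ_{g ∈ Λ'_n g₁} f(g) ‖ = 0. -/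
open MeasureTheory Filter Topology
open scoped Pointwise

/-!
Asymptotic invariance of `Λ n` under translation by the elements of `Λ m` lets one replace the sum
of `f` over `Λ n * {g₁}` by its average over `h ∈ Λ m` of the sums of `f (g * h * g₁)` over
`g ∈ Λ n`. Apply Cauchy–Schwarz in `g` and expand the square. Since `h₁`, `h₂` and `g₁` commute,
`f (g * h₁ * g₁)` and `f (g * h₂ * g₁)` are values of `f` at distance `h₁⁻¹ * h₂`, with base point
running over `Λ n * {h₁ * g₁}`, so for large `n` their average inner product is close to
`γ (h₁⁻¹ * h₂)`, uniformly in `g₁`. For fixed large `m` the average of `γ (h₁⁻¹ * h₂)` over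
`Λ m × Λ m` is small.

Singletons need not be measurable, so an integral over a finite measurable set is a finite sum only
for strongly measurable integrands. For `f` and its correlations this follows from weak
measurability, for `γ` from its being a limit of measurable functions.
-/

section FiniteSums

variable {ι E : Type*} [SeminormedAddCommGroup E]

theorem norm_sum_le_card_mul_add_norm_sum {s : Finset ι} {x y : ι → E} {η : ℝ}
    (h : ∀ i ∈ s, ‖x i - y i‖ ≤ η) :
    ‖∑ i ∈ s, x i‖ ≤ s.card * η + ‖∑ i ∈ s, y i‖ := by
  have hsub : ‖∑ i ∈ s, x i - ∑ i ∈ s, y i‖ ≤ s.card * η := by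
    rw [← Finset.sum_sub_distrib]
    simpa using norm_sum_le_of_le s h
  linarith [norm_le_norm_add_norm_sub' (∑ i ∈ s, x i) (∑ i ∈ s, y i)]

theorem norm_sum_sub_sum_le_card_symmDiff_mul [DecidableEq ι] {s t : Finset ι} {φ : ι → E} {C : ℝ}
    (hφ : ∀ i ∈ symmDiff s t, ‖φ i‖ ≤ C) :
    ‖∑ i ∈ s, φ i - ∑ i ∈ t, φ i‖ ≤ (symmDiff s t).card * C := by
  have hsum : ∀ u ⊆ symmDiff s t, ‖∑ i ∈ u, φ i‖ ≤ u.card * C := fun u hu => by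
    simpa using norm_sum_le_of_le u fun i hi => hφ i (hu hi)
  have hcard : (symmDiff s t).card = (s \ t).card + (t \ s).card :=
    Finset.card_union_of_disjoint disjoint_sdiff_sdiff
  calc ‖∑ i ∈ s, φ i - ∑ i ∈ t, φ i‖
      = ‖∑ i ∈ s \ t, φ i - ∑ i ∈ t \ s, φ i‖ := by rw [Finset.sum_sdiff_sub_sum_sdiff]
    _ ≤ ‖∑ i ∈ s \ t, φ i‖ + ‖∑ i ∈ t \ s, φ i‖ := norm_sub_le _ _
    _ ≤ (s \ t).card * C + (t \ s).card * C :=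
      add_le_add (hsum _ Finset.subset_union_left) (hsum _ Finset.subset_union_right)
    _ = (symmDiff s t).card * C := by rw [hcard]; push_cast; ring

theorem sum_mul_singleton {G M : Type*} [Mul G] [IsRightCancelMul G] [DecidableEq G]
    [AddCommMonoid M] (s : Finset G) (g : G) (φ : G → M) :
    ∑ x ∈ s * {g}, φ x = ∑ x ∈ s, φ (x * g) := by
  rw [Finset.mul_singleton]
  exact Finset.sum_image (mul_left_injective g).injOn

end FiniteSums

section VanDerCorputInequality

variable {𝕜 H : Type*} [RCLike 𝕜] [SeminormedAddCommGroup H] [InnerProductSpace 𝕜 H]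
variable {ι κ : Type*} {s : Finset ι} {t : Finset κ}

theorem sq_norm_sum_sum_le_card_mul_norm_sum_inner (u : ι → κ → H) :
    ‖∑ i ∈ s, ∑ j ∈ t, u i j‖ ^ 2 ≤
      s.card * ‖∑ j ∈ t, ∑ k ∈ t, ∑ i ∈ s, inner 𝕜 (u i j) (u i k)‖ := by
  have hexpand : ∑ j ∈ t, ∑ k ∈ t, ∑ i ∈ s, inner 𝕜 (u i j) (u i k) =
      ((∑ i ∈ s, ‖∑ j ∈ t, u i j‖ ^ 2 : ℝ) : 𝕜) := by
    push_cast
    simp_rw [← inner_self_eq_norm_sq_to_K (𝕜 := 𝕜), sum_inner, inner_sum]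
    calc ∑ j ∈ t, ∑ k ∈ t, ∑ i ∈ s, inner 𝕜 (u i j) (u i k)
        = ∑ j ∈ t, ∑ i ∈ s, ∑ k ∈ t, inner 𝕜 (u i j) (u i k) :=
          Finset.sum_congr rfl fun j _ => Finset.sum_comm
      _ = ∑ i ∈ s, ∑ j ∈ t, ∑ k ∈ t, inner 𝕜 (u i j) (u i k) := Finset.sum_comm
  rw [hexpand, RCLike.norm_ofReal, abs_of_nonneg (by positivity)]
  calc ‖∑ i ∈ s, ∑ j ∈ t, u i j‖ ^ 2
      ≤ (∑ i ∈ s, ‖∑ j ∈ t, u i j‖) ^ 2 := by gcongr; exact norm_sum_le _ _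
    _ ≤ s.card * ∑ i ∈ s, ‖∑ j ∈ t, u i j‖ ^ 2 := sq_sum_le_card_mul_sum_sq

theorem norm_sum_sum_le_of_norm_average_inner_sub_le {u : ι → κ → H} {c : κ → κ → 𝕜} {η θ : ℝ}
    (hu : ∀ j ∈ t, ∀ k ∈ t,
      ‖(s.card : ℝ)⁻¹ • ∑ i ∈ s, inner 𝕜 (u i j) (u i k) - c j k‖ ≤ η)
    (hc : ‖((t.card : ℝ) ^ 2)⁻¹ • ∑ j ∈ t, ∑ k ∈ t, c j k‖ ≤ θ) :
    ‖∑ i ∈ s, ∑ j ∈ t, u i j‖ ≤ s.card * t.card * √(η + θ) := by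
  obtain rfl | hs := s.eq_empty_or_nonempty
  · simp
  obtain rfl | ht := t.eq_empty_or_nonempty
  · simp
  have hs₀ : (0 : ℝ) < s.card := mod_cast hs.card_pos
  have ht₀ : (0 : ℝ) < t.card := mod_cast ht.card_pos
  set a : κ → κ → 𝕜 := fun j k => (s.card : ℝ)⁻¹ • ∑ i ∈ s, inner 𝕜 (u i j) (u i k) with ha
  have hc' : ‖∑ p ∈ t ×ˢ t, c p.1 p.2‖ ≤ (t.card : ℝ) ^ 2 * θ := by
    rwa [norm_smul, norm_inv, Real.norm_of_nonneg (by positivity),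
      inv_mul_le_iff₀ (by positivity), ← Finset.sum_product'] at hc
  have hsum : ‖∑ p ∈ t ×ˢ t, a p.1 p.2‖ ≤ (t.card : ℝ) ^ 2 * (η + θ) := by
    have hle := norm_sum_le_card_mul_add_norm_sum (s := t ×ˢ t) (x := fun p => a p.1 p.2)
      (y := fun p => c p.1 p.2) fun p hp =>
        hu p.1 (Finset.mem_product.mp hp).1 p.2 (Finset.mem_product.mp hp).2
    rw [Finset.card_product] at hle
    push_cast at hle
    linarith
  have hscale : ∑ j ∈ t, ∑ k ∈ t, ∑ i ∈ s, inner 𝕜 (u i j) (u i k) =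
      (s.card : ℝ) • ∑ p ∈ t ×ˢ t, a p.1 p.2 := by
    simp only [ha, Finset.sum_product, ← Finset.smul_sum, smul_inv_smul₀ hs₀.ne']
  calc ‖∑ i ∈ s, ∑ j ∈ t, u i j‖
      ≤ √(((s.card : ℝ) * t.card) ^ 2 * (η + θ)) := by
        refine Real.le_sqrt_of_sq_le ?_
        calc ‖∑ i ∈ s, ∑ j ∈ t, u i j‖ ^ 2
            ≤ s.card * ‖(s.card : ℝ) • ∑ p ∈ t ×ˢ t, a p.1 p.2‖ :=
              hscale ▸ sq_norm_sum_sum_le_card_mul_norm_sum_inner u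
          _ = (s.card : ℝ) ^ 2 * ‖∑ p ∈ t ×ˢ t, a p.1 p.2‖ := by
              rw [norm_smul, Real.norm_of_nonneg hs₀.le]; ring
          _ ≤ (s.card : ℝ) ^ 2 * ((t.card : ℝ) ^ 2 * (η + θ)) := by gcongr
          _ = ((s.card : ℝ) * t.card) ^ 2 * (η + θ) := by ring
    _ = s.card * t.card * √(η + θ) := by
        rw [Real.sqrt_mul (by positivity), Real.sqrt_sq (by positivity)]

theorem norm_le_of_norm_average_inner_sub_le (ht : t.Nonempty) {x : H} {u : ι → κ → H}
    {c : κ → κ → 𝕜} {δ η θ : ℝ}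
    (hx : ∀ j ∈ t, ‖x - ∑ i ∈ s, u i j‖ ≤ s.card * δ)
    (hu : ∀ j ∈ t, ∀ k ∈ t,
      ‖(s.card : ℝ)⁻¹ • ∑ i ∈ s, inner 𝕜 (u i j) (u i k) - c j k‖ ≤ η)
    (hc : ‖((t.card : ℝ) ^ 2)⁻¹ • ∑ j ∈ t, ∑ k ∈ t, c j k‖ ≤ θ) :
    ‖x‖ ≤ s.card * (δ + √(η + θ)) := by
  have ht₀ : (0 : ℝ) < t.card := mod_cast ht.card_pos
  refine le_of_mul_le_mul_left ?_ ht₀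
  calc t.card * ‖x‖ = ‖∑ _j ∈ t, x‖ := by
        rw [Finset.sum_const, ← Nat.cast_smul_eq_nsmul 𝕜, norm_smul, RCLike.norm_natCast]
    _ ≤ t.card * (s.card * δ) + ‖∑ j ∈ t, ∑ i ∈ s, u i j‖ := norm_sum_le_card_mul_add_norm_sum hx
    _ ≤ t.card * (s.card * δ) + s.card * t.card * √(η + θ) := by
      rw [Finset.sum_comm]
      gcongr
      exact norm_sum_sum_le_of_norm_average_inner_sub_le hu hc
    _ = t.card * (s.card * (δ + √(η + θ))) := by ring

end VanDerCorputInequality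

section Groups

variable {𝕜 H G : Type*} [RCLike 𝕜] [SeminormedAddCommGroup H] [InnerProductSpace 𝕜 H]
variable [NormedSpace ℝ H] [Group G] [DecidableEq G] {f : G → H} {γ : G → 𝕜} {C : ℝ}

theorem norm_average_mul_singleton_le {A B : Finset G} (hA : A.Nonempty) (hB : B.Nonempty) {g₁ : G}
    {δ η θ : ℝ} (hcomm : ∀ h ∈ B, h * g₁ = g₁ * h) (hf : ∀ g, ‖f g‖ ≤ C)
    (hinv : ∀ h ∈ B, ((symmDiff A (A * {h})).card : ℝ) ≤ δ * A.card)
    (hcorr : ∀ h₁ ∈ B, ∀ h₂ ∈ B,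
      ‖(A.card : ℝ)⁻¹ • ∑ g ∈ A * {h₁ * g₁}, inner 𝕜 (f g) (f (g * (h₁⁻¹ * h₂))) -
        γ (h₁⁻¹ * h₂)‖ ≤ η)
    (hγ : ‖((B.card : ℝ) ^ 2)⁻¹ • ∑ h₁ ∈ B, ∑ h₂ ∈ B, γ (h₁⁻¹ * h₂)‖ ≤ θ) :
    ‖(A.card : ℝ)⁻¹ • ∑ g ∈ A * {g₁}, f g‖ ≤ C * δ + √(η + θ) := by
  have hA₀ : (0 : ℝ) < A.card := mod_cast hA.card_pos
  have hC : 0 ≤ C := (norm_nonneg _).trans (hf 1)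
  have htranslate : ∀ h ∈ B,
      ‖∑ g ∈ A, f (g * g₁) - ∑ g ∈ A, f (g * h * g₁)‖ ≤ A.card * (C * δ) := fun h hh => by
    calc ‖∑ g ∈ A, f (g * g₁) - ∑ g ∈ A, f (g * h * g₁)‖
        = ‖∑ g ∈ A, f (g * g₁) - ∑ g ∈ A * {h}, f (g * g₁)‖ := by rw [sum_mul_singleton A h]
      _ ≤ (symmDiff A (A * {h})).card * C :=
          norm_sum_sub_sum_le_card_symmDiff_mul (s := A) (t := A * {h}) fun g _ => hf (g * g₁)
      _ ≤ δ * A.card * C := by gcongr; exact hinv h hh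
      _ = A.card * (C * δ) := by ring
  have hinner : ∀ h₁ ∈ B, ∀ h₂ ∈ B,
      ‖(A.card : ℝ)⁻¹ • ∑ g ∈ A, inner 𝕜 (f (g * h₁ * g₁)) (f (g * h₂ * g₁)) -
        γ (h₁⁻¹ * h₂)‖ ≤ η := fun h₁ hh₁ h₂ hh₂ => by
    have hshift : ∀ g, g * h₁ * g₁ * (h₁⁻¹ * h₂) = g * h₂ * g₁ := fun g => by
      rw [mul_assoc g h₁, mul_assoc g h₂, hcomm h₁ hh₁, hcomm h₂ hh₂]
      group
    have hsum := hcorr h₁ hh₁ h₂ hh₂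
    rw [sum_mul_singleton] at hsum
    simpa only [← mul_assoc _ h₁ g₁, hshift] using hsum
  rw [norm_smul, norm_inv, Real.norm_of_nonneg hA₀.le, inv_mul_le_iff₀ hA₀, sum_mul_singleton]
  exact norm_le_of_norm_average_inner_sub_le hB htranslate hinner hγ

theorem uniform_van_der_Corput_finset {ι : Type*} {l : Filter ι} [l.NeBot] {K : Set G}
    (hKmul : ∀ g ∈ K, ∀ h ∈ K, g * h ∈ K) (hKcomm : ∀ g ∈ K, ∀ h ∈ K, g * h = h * g)
    {Λ : ι → Finset G} (hΛ : ∀ᶠ n in l, (Λ n).Nonempty ∧ ∀ g ∈ Λ n, g ∈ K)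
    (hΛunif : ∀ᶠ m in l, ∀ ε > (0 : ℝ), ∀ᶠ n in l, ∀ g ∈ Λ m,
      ((symmDiff (Λ n) (Λ n * {g})).card : ℝ) ≤ ε * (Λ n).card)
    (hf : ∀ g, ‖f g‖ ≤ C)
    (hγ : Tendsto
      (fun m => (((Λ m).card : ℝ) ^ 2)⁻¹ • ∑ h₁ ∈ Λ m, ∑ h₂ ∈ Λ m, γ (h₁⁻¹ * h₂)) l (𝓝 0))
    (hγunif : ∀ h : G, ∀ ε > (0 : ℝ), ∀ᶠ n in l, ∀ g₁ ∈ K,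
      ‖((Λ n).card : ℝ)⁻¹ • (∑ g ∈ Λ n * {g₁}, inner 𝕜 (f g) (f (g * h))) - γ h‖ ≤ ε) :
    ∀ ε > (0 : ℝ), ∀ᶠ n in l, ∀ g₁ ∈ K, ‖((Λ n).card : ℝ)⁻¹ • ∑ g ∈ Λ n * {g₁}, f g‖ ≤ ε := by
  intro ε hε
  have hC : 0 ≤ C := (norm_nonneg _).trans (hf 1)
  set η : ℝ := ε ^ 2 / 8 with hη
  have hη₀ : 0 < η := by positivity
  have hγη := (tendsto_zero_iff_norm_tendsto_zero.mp hγ).eventually_le_const hη₀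
  obtain ⟨m, hmγ, ⟨hmne, hmK⟩, hminv⟩ := (hγη.and (hΛ.and hΛunif)).exists
  have hcorr : ∀ᶠ n in l, ∀ h₁ ∈ Λ m, ∀ h₂ ∈ Λ m, ∀ g₁ ∈ K,
      ‖((Λ n).card : ℝ)⁻¹ • (∑ g ∈ Λ n * {g₁}, inner 𝕜 (f g) (f (g * (h₁⁻¹ * h₂)))) -
        γ (h₁⁻¹ * h₂)‖ ≤ η := by
    simp only [eventually_all_finset]
    exact fun h₁ _ h₂ _ => hγunif _ η hη₀
  filter_upwards [hΛ, hminv (ε / (2 * (C + 1))) (by positivity), hcorr]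
    with n ⟨hnne, _⟩ hninv hncorr g₁ hg₁
  have hsqrt : √(η + η) = ε / 2 := by
    rw [hη, show ε ^ 2 / 8 + ε ^ 2 / 8 = (ε / 2) ^ 2 by ring, Real.sqrt_sq (by positivity)]
  calc ‖((Λ n).card : ℝ)⁻¹ • ∑ g ∈ Λ n * {g₁}, f g‖
      ≤ C * (ε / (2 * (C + 1))) + √(η + η) :=
        norm_average_mul_singleton_le hnne hmne (fun h hh => hKcomm h (hmK h hh) g₁ hg₁) hf hninv
          (fun h₁ hh₁ h₂ hh₂ => hncorr h₁ hh₁ h₂ hh₂ _ (hKmul _ (hmK _ hh₁) _ hg₁)) hmγ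
    _ ≤ (C + 1) * (ε / (2 * (C + 1))) + ε / 2 := by rw [hsqrt]; gcongr; linarith
    _ = ε := by field_simp; ring

end Groups

section CountingMeasure

variable {α : Type*} [MeasurableSpace α] {s : Finset α}

theorem toReal_count_coe_finset (hs : MeasurableSet (s : Set α)) :
    (Measure.count (s : Set α)).toReal = s.card := by
  simp [Measure.count_apply_finset' hs]

theorem restrict_count_coe_finset (hs : MeasurableSet (s : Set α)) :
    Measure.count.restrict (s : Set α) = ∑ a ∈ s, Measure.dirac a := by
  classical
  ext t ht
  have hinter : t ∩ s = ((s.filter (· ∈ t) : Finset α) : Set α) := by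
    rw [Finset.coe_filter, Set.inter_comm]
    rfl
  rw [Measure.restrict_apply ht, hinter, Measure.count_apply_finset' (hinter ▸ ht.inter hs),
    Measure.finsetSum_apply, Finset.card_filter]
  simp [Measure.dirac_apply' _ ht, Set.indicator_apply]

theorem setIntegral_count_coe_finset {E : Type*} [NormedAddCommGroup E] [NormedSpace ℝ E]
    [CompleteSpace E] {φ : α → E} (hs : MeasurableSet (s : Set α))
    (hφ : StronglyMeasurable ((s : Set α).indicator φ)) :
    ∫ a in s, φ a ∂Measure.count = ∑ a ∈ s, φ a := by
  calc ∫ a in s, φ a ∂Measure.count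
      = ∫ a in s, (s : Set α).indicator φ a ∂Measure.count :=
        (setIntegral_congr_fun hs fun _ ha => Set.indicator_of_mem ha φ).symm
    _ = ∑ a ∈ s, ∫ b, (s : Set α).indicator φ b ∂Measure.dirac a := by
      rw [restrict_count_coe_finset hs, integral_finsetSum_measure]
      exact fun a _ => integrable_dirac' hφ enorm_lt_top
    _ = ∑ a ∈ s, φ a := Finset.sum_congr rfl fun a ha => by
      rw [integral_dirac' _ _ hφ, Set.indicator_of_mem ha]

theorem exists_finset_eventually_coe_eq {ι : Type*} {l : Filter ι} {Λ : ι → Set α}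
    (hΛ : ∀ n, MeasurableSet (Λ n))
    (hΛfin : ∀ᶠ n in l, 0 < Measure.count (Λ n) ∧ Measure.count (Λ n) < ⊤) :
    ∃ F : ι → Finset α, ∀ᶠ n in l, (F n : Set α) = Λ n ∧ (F n).Nonempty := by
  have hex : ∀ᶠ n in l, ∃ A : Finset α, (A : Set α) = Λ n ∧ A.Nonempty :=
    hΛfin.mono fun n hn => by
      have hfin : (Λ n).Finite := (Measure.count_apply_lt_top' (hΛ n)).mp hn.2
      exact ⟨hfin.toFinset, hfin.coe_toFinset,
        hfin.toFinset_nonempty.mpr (Measure.count_ne_zero_iff.mp hn.1.ne')⟩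
  exact skolem.mp hex

end CountingMeasure

section WeakMeasurability

variable {𝕜 H α : Type*} [RCLike 𝕜] [NormedAddCommGroup H] [InnerProductSpace 𝕜 H]
variable [MeasurableSpace α] {f : α → H}

theorem measurable_inner_const_left {x : H} (hf : Measurable fun a => inner 𝕜 (f a) x) :
    Measurable fun a => inner 𝕜 x (f a) := by
  simpa only [Function.comp_def, inner_conj_symm] using RCLike.continuous_conj.measurable.comp hf

theorem stronglyMeasurable_of_measurable_inner {V : Submodule 𝕜 H} [FiniteDimensional 𝕜 V]
    (hfV : ∀ a, f a ∈ V) (hf : ∀ x, Measurable fun a => inner 𝕜 (f a) x) :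
    StronglyMeasurable f := by
  set b := stdOrthonormalBasis 𝕜 V
  have hexpand : f = fun a => ∑ i, inner 𝕜 (b i : H) (f a) • (b i : H) := funext fun a => by
    simpa using congrArg Subtype.val (b.sum_repr' ⟨f a, hfV a⟩).symm
  rw [hexpand]
  exact Finset.stronglyMeasurable_fun_sum _ fun i _ =>
    (measurable_inner_const_left (hf _)).stronglyMeasurable.smul_const _

-- On a finite set `f` takes its values in the span of finitely many vectors; this replaces the
-- separability of the range that Pettis' theorem needs.
theorem stronglyMeasurable_indicator_of_measurable_inner {s : Finset α}
    (hs : MeasurableSet (s : Set α)) (hf : ∀ x, Measurable fun a => inner 𝕜 (f a) x) :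
    StronglyMeasurable ((s : Set α).indicator f) := by
  have : FiniteDimensional 𝕜 (Submodule.span 𝕜 (f '' s)) :=
    .span_of_finite 𝕜 (s.finite_toSet.image f)
  refine stronglyMeasurable_of_measurable_inner (V := Submodule.span 𝕜 (f '' s)) (fun a => ?_)
    fun x => ?_
  · by_cases ha : a ∈ (s : Set α)
    · rw [Set.indicator_of_mem ha]
      exact Submodule.subset_span (Set.mem_image_of_mem f ha)
    · rw [Set.indicator_of_notMem ha]
      exact Submodule.zero_mem _
  · convert (hf x).indicator hs using 1
    ext a
    by_cases ha : a ∈ (s : Set α) <;> simp [ha]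

end WeakMeasurability

section MeasurableGroup

variable {𝕜 H G : Type*} [RCLike 𝕜] [NormedAddCommGroup H] [InnerProductSpace 𝕜 H]
variable [Group G] [MeasurableSpace G] [MeasurableMul G] {f : G → H} {γ : G → 𝕜} {s : Finset G}

theorem measurableSet_coe_mul_singleton [DecidableEq G] (hs : MeasurableSet (s : Set G)) (g : G) :
    MeasurableSet ((s * {g} : Finset G) : Set G) := by
  rw [Finset.coe_mul, Finset.coe_singleton, Set.mul_singleton, Set.image_mul_right]
  exact measurable_mul_const g⁻¹ hs

theorem toReal_count_symmDiff_mul_singleton [DecidableEq G] (hs : MeasurableSet (s : Set G))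
    (g : G) : (Measure.count (symmDiff (s : Set G) (s * {g}))).toReal =
      (symmDiff s (s * {g})).card := by
  rw [← Finset.coe_singleton, ← Finset.coe_mul, ← Finset.coe_symmDiff, toReal_count_coe_finset]
  rw [Finset.coe_symmDiff]
  exact hs.symmDiff (measurableSet_coe_mul_singleton hs g)

theorem setIntegral_count_mul_singleton [DecidableEq G] [NormedSpace ℝ H] [CompleteSpace H]
    (hs : MeasurableSet (s : Set G)) (hf : ∀ x, Measurable fun g => inner 𝕜 (f g) x) (g₁ : G) :
    ∫ g in (s : Set G) * {g₁}, f g ∂Measure.count = ∑ g ∈ s * {g₁}, f g := by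
  have hmul := measurableSet_coe_mul_singleton hs g₁
  rw [← Finset.coe_singleton, ← Finset.coe_mul]
  exact setIntegral_count_coe_finset hmul
    (stronglyMeasurable_indicator_of_measurable_inner hmul hf)

theorem setIntegral_count_inner_mul_right (hs : MeasurableSet (s : Set G))
    (hf : ∀ x, Measurable fun g => inner 𝕜 (f g) x) (h : G) :
    ∫ g in s, inner 𝕜 (f g) (f (g * h)) ∂Measure.count = ∑ g ∈ s, inner 𝕜 (f g) (f (g * h)) := by
  refine setIntegral_count_coe_finset hs ?_
  convert (stronglyMeasurable_indicator_of_measurable_inner hs hf).inner (𝕜 := 𝕜)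
    (stronglyMeasurable_indicator_of_measurable_inner hs
      fun x => (hf x).comp (measurable_mul_const h)) using 1
  ext g
  by_cases hg : g ∈ (s : Set G) <;> simp [hg]

theorem setIntegral_count_mul_singleton_inner_mul_right [DecidableEq G]
    (hs : MeasurableSet (s : Set G)) (hf : ∀ x, Measurable fun g => inner 𝕜 (f g) x) (g₁ h : G) :
    ∫ g in (s : Set G) * {g₁}, inner 𝕜 (f g) (f (g * h)) ∂Measure.count =
      ∑ g ∈ s * {g₁}, inner 𝕜 (f g) (f (g * h)) := by
  rw [← Finset.coe_singleton, ← Finset.coe_mul]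
  exact setIntegral_count_inner_mul_right (measurableSet_coe_mul_singleton hs g₁) hf h

theorem measurable_of_tendsto_average_inner {ι : Type*} {l : Filter ι} [l.NeBot]
    [l.IsCountablyGenerated] {F : ι → Finset G} (hf : ∀ x, Measurable fun g => inner 𝕜 (f g) x)
    (hγ : ∀ h, Tendsto
      (fun n => ((F n).card : ℝ)⁻¹ • ∑ g ∈ F n, inner 𝕜 (f g) (f (g * h))) l (𝓝 (γ h))) :
    Measurable γ :=
  measurable_of_tendsto_metrizable' l
    (fun n => (Finset.measurable_fun_sum (F n) fun g _ =>
      (measurable_inner_const_left (hf (f g))).comp (measurable_const_mul g)).const_smul _)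
    (tendsto_pi_nhds.mpr hγ)

theorem setIntegral_count_setIntegral_count_inv_mul [MeasurableInv G]
    (hs : MeasurableSet (s : Set G)) (hγ : Measurable γ) :
    ∫ h₁ in s, ∫ h₂ in s, γ (h₁⁻¹ * h₂) ∂Measure.count ∂Measure.count =
      ∑ h₁ ∈ s, ∑ h₂ ∈ s, γ (h₁⁻¹ * h₂) := by
  have hinner : ∀ h₁, ∫ h₂ in s, γ (h₁⁻¹ * h₂) ∂Measure.count = ∑ h₂ ∈ s, γ (h₁⁻¹ * h₂) :=
    fun h₁ => setIntegral_count_coe_finset hs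
      ((hγ.comp (measurable_const_mul h₁⁻¹)).stronglyMeasurable.indicator hs)
  have houter : Measurable fun h₁ => ∑ h₂ ∈ s, γ (h₁⁻¹ * h₂) :=
    Finset.measurable_fun_sum s fun h₂ _ =>
      hγ.comp ((measurable_mul_const h₂).comp measurable_inv)
  simp only [hinner]
  exact setIntegral_count_coe_finset hs (houter.stronglyMeasurable.indicator hs)

end MeasurableGroup

theorem uniform_van_der_Corput_general {𝕜 H G ι : Type*} [RCLike 𝕜] [NormedAddCommGroup H]
    [InnerProductSpace 𝕜 H] [NormedSpace ℝ H] [CompleteSpace H] [Group G] [MeasurableSpace G]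
    [MeasurableMul G] [MeasurableInv G] {l : Filter ι} [l.NeBot] [l.IsCountablyGenerated]
    {K : Set G} (hKmul : ∀ g ∈ K, ∀ h ∈ K, g * h ∈ K)
    (hKcomm : ∀ g ∈ K, ∀ h ∈ K, g * h = h * g)
    {Λ : ι → Set G} (hΛ : ∀ n, MeasurableSet (Λ n) ∧ Λ n ⊆ K)
    (hΛfin : ∀ᶠ n in l, 0 < Measure.count (Λ n) ∧ Measure.count (Λ n) < ⊤)
    (hΛunif : ∀ᶠ m in l, ∀ ε > (0 : ℝ), ∀ᶠ n in l, ∀ g ∈ Λ m,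
      (Measure.count (symmDiff (Λ n) (Λ n * {g}))).toReal ≤ ε * (Measure.count (Λ n)).toReal)
    {f : G → H} (hbdd : ∃ C : ℝ, ∀ g, ‖f g‖ ≤ C)
    (hweak : ∀ x, Measurable fun g => inner 𝕜 (f g) x) {γ : G → 𝕜}
    (hγ : ∀ h, Tendsto (fun n => (Measure.count (Λ n)).toReal⁻¹ •
      ∫ g in Λ n, inner 𝕜 (f g) (f (g * h)) ∂Measure.count) l (𝓝 (γ h)))
    (hγ0 : Tendsto (fun m => ((Measure.count (Λ m)).toReal ^ 2)⁻¹ •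
      ∫ h₁ in Λ m, ∫ h₂ in Λ m, γ (h₁⁻¹ * h₂) ∂Measure.count ∂Measure.count) l (𝓝 0))
    (hγunif : ∀ h, ∀ ε > (0 : ℝ), ∀ᶠ n in l, ∀ g₁ ∈ K,
      ‖(Measure.count (Λ n)).toReal⁻¹ •
        (∫ g in Λ n * {g₁}, inner 𝕜 (f g) (f (g * h)) ∂Measure.count) - γ h‖ ≤ ε) :
    ∀ ε > (0 : ℝ), ∀ᶠ n in l, ∀ g₁ ∈ K,
      ‖(Measure.count (Λ n)).toReal⁻¹ • ∫ g in Λ n * {g₁}, f g ∂Measure.count‖ ≤ ε := by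
  classical
  obtain ⟨C, hC⟩ := hbdd
  obtain ⟨F, hF⟩ := exists_finset_eventually_coe_eq (fun n => (hΛ n).1) hΛfin
  have hFΛ : ∀ᶠ n in l, Λ n = F n ∧ MeasurableSet (F n : Set G) :=
    hF.mono fun n hn => ⟨hn.1.symm, hn.1 ▸ (hΛ n).1⟩
  have hFK : ∀ᶠ n in l, (F n).Nonempty ∧ ∀ g ∈ F n, g ∈ K :=
    hF.mono fun n hn => ⟨hn.2, fun g hg => (hΛ n).2 (hn.1 ▸ hg)⟩
  have hFunif : ∀ᶠ m in l, ∀ ε > (0 : ℝ), ∀ᶠ n in l, ∀ g ∈ F m,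
      ((symmDiff (F n) (F n * {g})).card : ℝ) ≤ ε * (F n).card := by
    filter_upwards [hFΛ, hΛunif] with m ⟨hm, _⟩ hinv ε hε
    filter_upwards [hFΛ, hinv ε hε] with n ⟨hn, hmeas⟩ hle g hg
    simpa only [hn, toReal_count_symmDiff_mul_singleton hmeas, toReal_count_coe_finset hmeas]
      using hle g (hm ▸ hg)
  have hγmeas : Measurable γ := by
    refine measurable_of_tendsto_average_inner (F := F) hweak fun h => (hγ h).congr' ?_
    filter_upwards [hFΛ] with n ⟨hn, hmeas⟩
    rw [hn, toReal_count_coe_finset hmeas, setIntegral_count_inner_mul_right hmeas hweak]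
  have hFγ : Tendsto (fun m => (((F m).card : ℝ) ^ 2)⁻¹ •
      ∑ h₁ ∈ F m, ∑ h₂ ∈ F m, γ (h₁⁻¹ * h₂)) l (𝓝 0) := by
    refine hγ0.congr' ?_
    filter_upwards [hFΛ] with m ⟨hm, hmeas⟩
    rw [hm, toReal_count_coe_finset hmeas,
      setIntegral_count_setIntegral_count_inv_mul hmeas hγmeas]
  have hFγunif : ∀ h, ∀ ε > (0 : ℝ), ∀ᶠ n in l, ∀ g₁ ∈ K,
      ‖((F n).card : ℝ)⁻¹ • (∑ g ∈ F n * {g₁}, inner 𝕜 (f g) (f (g * h))) - γ h‖ ≤ ε := by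
    intro h ε hε
    filter_upwards [hFΛ, hγunif h ε hε] with n ⟨hn, hmeas⟩ hle g₁ hg₁
    simpa only [hn, toReal_count_coe_finset hmeas,
      setIntegral_count_mul_singleton_inner_mul_right hmeas hweak] using hle g₁ hg₁
  intro ε hε
  filter_upwards [hFΛ, uniform_van_der_Corput_finset hKmul hKcomm hFK hFunif hC hFγ hFγunif ε hε]
    with n ⟨hn, hmeas⟩ hle g₁ hg₁
  simpa only [hn, toReal_count_coe_finset hmeas, setIntegral_count_mul_singleton hmeas hweak]
    using hle g₁ hg₁

/-- **Lemma 5.1(2), the uniform "van der Corput" lemma.**  Let `G'` be a second countable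
topological group whose counting measure on the Borel σ-algebra is right invariant, `K` a
Borel measurable abelian subsemigroup of `G'` and `(Λ n)` a uniform Følner sequence in `K`.
Let `H` be a Hilbert space and `f : G' → H` bounded and weakly Borel measurable with
`⟨f(·), f(·)⟩` Borel measurable.  If `γ h = lim_n (1/μ(Λ n)) Σ_{g ∈ Λ n} ⟨f(g), f(gh)⟩`
exists for all `h`, `lim_m (1/μ(Λ m)²) Σ_{h₁ ∈ Λ m} Σ_{h₂ ∈ Λ m} γ (h₁⁻¹ h₂) = 0`, and
`lim_n sup_{g₁ ∈ K} |(1/μ(Λ n)) Σ_{g ∈ Λ n g₁} ⟨f(g), f(gh)⟩ − γ h| = 0` for all `h`, then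
`lim_n sup_{g₁ ∈ K} ‖(1/μ(Λ n)) Σ_{g ∈ Λ n g₁} f(g)‖ = 0`. -/
theorem uniform_van_der_Corput
    -- a second countable topological group G' with right invariant counting measure
    {G' : Type*} [Group G'] [TopologicalSpace G'] [IsTopologicalGroup G']
    [SecondCountableTopology G'] [MeasurableSpace G'] [BorelSpace G']
    (hRight : ∀ (V : Set G') (g : G'), MeasurableSet V →
      Measure.count (V * {g}) = Measure.count V)
    -- a Borel measurable abelian subsemigroup K of G'
    (K : Set G') (hKmeas : MeasurableSet K) (hKmul : ∀ g ∈ K, ∀ h ∈ K, g * h ∈ K)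
    (hKcomm : ∀ g ∈ K, ∀ h ∈ K, g * h = h * g)
    -- a uniform Følner sequence (Λ n) in K (finite and nonempty for n large enough)
    (Λ : ℕ → Set G') (hΛmeas : ∀ n, MeasurableSet (Λ n) ∧ Λ n ⊆ K)
    (hΛfin : ∀ᶠ n in atTop, 0 < Measure.count (Λ n) ∧ Measure.count (Λ n) < ⊤)
    (hΛfolner : ∀ g ∈ K, Tendsto
      (fun n => (Measure.count (symmDiff (Λ n) (Λ n * {g}))).toReal /
        (Measure.count (Λ n)).toReal) atTop (𝓝 0))
    (hΛunif : ∀ᶠ m in atTop, ∀ ε > (0 : ℝ), ∀ᶠ n in atTop, ∀ g ∈ Λ m,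
      (Measure.count (symmDiff (Λ n) (Λ n * {g}))).toReal ≤ ε * (Measure.count (Λ n)).toReal)
    -- a Hilbert space H and a bounded, weakly measurable function f : G' → H
    {H : Type*} [NormedAddCommGroup H] [InnerProductSpace ℂ H] [CompleteSpace H]
    (f : G' → H) (hbdd : ∃ C : ℝ, ∀ g, ‖f g‖ ≤ C)
    (hweak : ∀ x : H, Measurable fun g => (inner ℂ (f g) x : ℂ))
    (hff : Measurable fun p : G' × G' => (inner ℂ (f p.1) (f p.2) : ℂ))
    -- γ h is the limit of the correlation averages
    (γ : G' → ℂ)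
    (hγ : ∀ h : G', Tendsto
      (fun n => (Measure.count (Λ n)).toReal⁻¹ •
        ∫ g in Λ n, (inner ℂ (f g) (f (g * h)) : ℂ) ∂Measure.count)
      atTop (𝓝 (γ h)))
    -- the van der Corput condition (5.1)
    (hγ0 : Tendsto
      (fun m => ((Measure.count (Λ m)).toReal ^ 2)⁻¹ •
        ∫ h₁ in Λ m, ∫ h₂ in Λ m, γ (h₁⁻¹ * h₂) ∂Measure.count ∂Measure.count)
      atTop (𝓝 0))
    -- the uniform correlation hypothesis (in ε-form)
    (hγunif : ∀ h : G', ∀ ε > (0 : ℝ), ∀ᶠ n in atTop, ∀ g₁ ∈ K,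
      ‖(Measure.count (Λ n)).toReal⁻¹ •
          (∫ g in Λ n * {g₁}, (inner ℂ (f g) (f (g * h)) : ℂ) ∂Measure.count) - γ h‖ ≤ ε) :
    -- conclusion (in ε-form)
    ∀ ε > (0 : ℝ), ∀ᶠ n in atTop, ∀ g₁ ∈ K,
      ‖(Measure.count (Λ n)).toReal⁻¹ • ∫ g in Λ n * {g₁}, f g ∂Measure.count‖ ≤ ε :=
  uniform_van_der_Corput_general hKmul hKcomm hΛmeas hΛfin hΛunif hbdd hweak hγ hγ0 hγunif
end
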